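/- arXiv:0902.2795 — 3 statements merged into one kernel-verified Lean document; each statement's English description precedes it below -/
import Mathlib

section
/- Let G=(V,E) be an undirected graph and T ⊆ V a set of terminals. Let pq be any edge of G whose both endpoints p and q are non-terminals (p,q ∈ V∖T), and let G₁ = G − pq (the graph obtained by deleting the edge pq) and G₂ = G/pq (the graph obtained by contracting the edge pq). Then at least one of the following holds: (i) for all u,v ∈ T, κ'_{G₁}(u,v) = κ'_G(u,v); or (ii) for all u,v ∈ T, κ'_{G₂}(u,v) = κ'_G(u,v). -/
open SimpleGraph

/-- Two walks between the same pair of vertices are *element-disjoint* with respect to a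
terminal set `T` if they share no edges and every common vertex is a terminal or an
endpoint. -/
def ElemDisjWalks {V : Type*} (T : Set V) {G : SimpleGraph V} {u v : V}
    (W₁ W₂ : G.Walk u v) : Prop :=
  (∀ e, e ∈ W₁.edges → e ∉ W₂.edges) ∧
  (∀ x, x ∈ W₁.support → x ∈ W₂.support → x ∈ T ∪ {u, v})

/-- There exist `k` pairwise element-disjoint `u`-`v` paths in `G`
(with respect to the terminal set `T`). -/
def HasElemPaths {V : Type*} (G : SimpleGraph V) (T : Set V) (u v : V) (k : ℕ) : Prop :=
  ∃ P : Fin k → G.Walk u v, (∀ i, (P i).IsPath) ∧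
    ∀ i j, i ≠ j → ElemDisjWalks T (P i) (P j)

/-- The element-connectivity `κ'_G(u,v)`: the maximum number of `u`-`v` paths that are
pairwise disjoint in edges and in non-terminal vertices. -/
noncomputable def elemConn {V : Type*} (G : SimpleGraph V) (T : Set V) (u v : V) : ℕ :=
  sSup {k | HasElemPaths G T u v k}

/-- The graph `G/pq` obtained from `G` by contracting the edge `pq`: the merged vertex
is `p`, and `q` becomes an isolated vertex (so the vertex set is unchanged). -/
def contractEdge {V : Type*} [DecidableEq V] (G : SimpleGraph V) (p q : V) :
    SimpleGraph V :=
  SimpleGraph.fromRel (fun a b =>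
    ∃ x y, G.Adj x y ∧ (if x = q then p else x) = a ∧ (if y = q then p else y) = b)

open Relation in
lemma menger_aux {E : Type*} [Fintype E] (r : E → E → Prop) (A B : Set E) (k : ℕ)
    (h : ∀ (S C : Finset E), (∀ a ∈ A, a ∈ S ∨ a ∈ C) →
      (∀ a ∈ S, ∀ b, r a b → b ∈ S ∨ b ∈ C) → (∀ b ∈ S, b ∉ B) → k ≤ C.card) :
    ∃ (a : Fin k → E) (g : E → E → Prop), (∀ i, a i ∈ A) ∧ (∀ x y, g x y → x = y ∨ r x y) ∧
      (∀ i, ∃ b ∈ B, ReflTransGen g (a i) b) ∧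
      (∀ i j x, ReflTransGen g (a i) x → ReflTransGen g (a j) x → i = j) := by
  classical
  let t : E ⊕ Fin k → Finset (E ⊕ Fin k) := Sum.elim
    (fun e => Finset.univ.filter (fun y => Sum.elim (fun e' => e = e' ∨ r e e') (fun _ => e ∈ B) y))
    (fun _ => Finset.univ.filter (fun y => Sum.elim (fun e' => e' ∈ A) (fun _ => False) y))
  have hall : ∀ X : Finset (E ⊕ Fin k), X.card ≤ (X.biUnion t).card := by
    intro X
    rw [← Finset.card_toLeft_add_card_toRight (u := X),
      ← Finset.card_toLeft_add_card_toRight (u := X.biUnion t)]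
    have hsub : X.toLeft ⊆ (X.biUnion t).toLeft := by
      intro e he
      rw [Finset.mem_toLeft] at he ⊢
      exact Finset.mem_biUnion.2 ⟨_, he, by simp [t]⟩
    have hk : X.toRight.card ≤ k := by simpa using X.toRight.card_le_univ
    have h1 := Finset.card_le_card hsub
    by_cases hne : X.toRight = ∅
    · simp only [hne, Finset.card_empty]; omega
    obtain ⟨i, hi⟩ := Finset.nonempty_iff_ne_empty.2 hne
    rw [Finset.mem_toRight] at hi
    by_cases hB : ∃ b ∈ X.toLeft, b ∈ B
    · obtain ⟨b, hb, hbB⟩ := hB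
      have : (X.biUnion t).toRight = Finset.univ := by
        ext j
        simp only [Finset.mem_toRight, Finset.mem_univ, iff_true]
        exact Finset.mem_biUnion.2 ⟨_, Finset.mem_toLeft.1 hb, by simp [t, hbB]⟩
      rw [this]
      simp only [Finset.card_univ, Fintype.card_fin]
      omega
    · push Not at hB
      have := h X.toLeft ((X.biUnion t).toLeft \ X.toLeft) (by
        intro a ha
        by_cases h' : a ∈ X.toLeft
        · exact Or.inl h'
        · refine Or.inr (Finset.mem_sdiff.2 ⟨?_, h'⟩)
          rw [Finset.mem_toLeft]
          exact Finset.mem_biUnion.2 ⟨_, hi, by simp [t, ha]⟩) (by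
        intro a ha b hab
        by_cases h' : b ∈ X.toLeft
        · exact Or.inl h'
        · refine Or.inr (Finset.mem_sdiff.2 ⟨?_, h'⟩)
          rw [Finset.mem_toLeft] at ha ⊢
          exact Finset.mem_biUnion.2 ⟨_, ha, by simp [t, hab]⟩) hB
      rw [Finset.card_sdiff_of_subset hsub] at this
      omega
  obtain ⟨f, hf, hft⟩ := (Finset.all_card_le_biUnion_card_iff_exists_injective t).1 hall
  have hA : ∀ i : Fin k, ∃ a ∈ A, f (Sum.inr i) = Sum.inl a := by
    intro i
    have := hft (Sum.inr i)
    rcases hh : f (Sum.inr i) with a | j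
    · exact ⟨a, by simpa [t, hh] using this, rfl⟩
    · simp [t, hh] at this
  choose a haA hfa using hA
  have key : ∀ i x, ReflTransGen (fun x y => f (Sum.inl x) = Sum.inl y) x (a i) → x = a i := by
    intro i x hx
    rcases ReflTransGen.cases_tail hx with h1 | ⟨z, -, hz⟩
    · exact h1.symm
    · have := hf (hz.trans (hfa i).symm)
      simp at this
  refine ⟨a, fun x y => f (Sum.inl x) = Sum.inl y, haA, ?_, ?_, ?_⟩
  · intro x y hxy
    have := hft (Sum.inl x)
    rw [hxy] at this
    simpa [t] using this
  · intro i
    by_contra hcon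
    push Not at hcon
    have hstep : ∀ x : {x // ReflTransGen (fun x y => f (Sum.inl x) = Sum.inl y) (a i) x},
        ∃ y : {x // ReflTransGen (fun x y => f (Sum.inl x) = Sum.inl y) (a i) x},
          f (Sum.inl x.1) = Sum.inl y.1 := by
      rintro ⟨x, hx⟩
      rcases hh : f (Sum.inl x) with y | j
      · exact ⟨⟨y, hx.tail hh⟩, rfl⟩
      · have := hft (Sum.inl x)
        rw [hh] at this
        exact absurd hx (hcon x (by simpa [t] using this))
    choose F hF using hstep
    have hFi : Function.Injective F := by
      intro x y hxy
      have : f (Sum.inl x.1) = f (Sum.inl y.1) := by rw [hF, hF, hxy]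
      exact Subtype.ext (Sum.inl_injective (hf this))
    obtain ⟨z, hz⟩ := Finite.surjective_of_injective hFi ⟨a i, .refl⟩
    have h2 := hF z
    rw [hz] at h2
    have := hf (h2.trans (hfa i).symm)
    simp at this
  · intro i j x hi hj
    have hu : Relator.RightUnique (Function.swap (fun x y => f (Sum.inl x) = Sum.inl y)) := by
      intro x y z hy hz
      exact Sum.inl_injective (hf (Eq.trans hy (Eq.symm hz)))
    have hij : a i = a j := by
      rcases ReflTransGen.total_of_right_unique hu (reflTransGen_swap.2 hi)
        (reflTransGen_swap.2 hj) with h' | h'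
      · exact (key i _ (reflTransGen_swap.1 h')).symm
      · exact key j _ (reflTransGen_swap.1 h')
    have : f (Sum.inr i) = f (Sum.inr j) := by rw [hfa, hfa, hij]
    exact Sum.inr_injective (hf this)

structure ECut {V : Type*} (T A B : Set V) (u v : V) : Prop where
  disj : ∀ w ∈ A, w ∉ B
  cov : ∀ t ∈ T, t ∈ A ∨ t ∈ B
  hu : u ∈ A
  hv : v ∈ B

lemma ECut.swap {V : Type*} {T A B : Set V} {u v : V} (h : ECut T A B u v) : ECut T B A v u :=
  ⟨fun w hw h' => h.disj w h' hw, fun t ht => (h.cov t ht).symm, h.hv, h.hu⟩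

def CutNormal {V : Type*} (G : SimpleGraph V) (T A B : Set V) : Prop :=
  ∀ a ∈ A, ∀ b ∈ B, G.Adj a b → a ∈ T ∧ b ∈ T

open Classical in
noncomputable def cMiss {V : Type*} [Fintype V] (A B : Set V) : Finset V :=
  Finset.univ.filter (fun w => w ∉ A ∧ w ∉ B)

open Classical in
noncomputable def cEdg {V : Type*} [Fintype V] (G : SimpleGraph V) (A B : Set V) :
    Finset (V × V) :=
  Finset.univ.filter (fun z => z.1 ∈ A ∧ z.2 ∈ B ∧ G.Adj z.1 z.2)

noncomputable def cf {V : Type*} [Fintype V] (G : SimpleGraph V) (A B : Set V) : ℕ :=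
  (cMiss A B).card + (cEdg G A B).card

section
variable {V : Type*} [Fintype V]

lemma mem_cMiss {A B : Set V} {w : V} : w ∈ cMiss A B ↔ w ∉ A ∧ w ∉ B := by simp [cMiss]

lemma mem_cEdg {G : SimpleGraph V} {A B : Set V} {z : V × V} :
    z ∈ cEdg G A B ↔ z.1 ∈ A ∧ z.2 ∈ B ∧ G.Adj z.1 z.2 := by simp [cEdg]

lemma cf_swap (G : SimpleGraph V) (A B : Set V) : cf G A B = cf G B A := by
  have h1 : cMiss A B = cMiss B A := by
    ext w; simp only [mem_cMiss]; tauto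
  have h2 : (cEdg G A B).card = (cEdg G B A).card := by
    refine Finset.card_bij (fun z _ => z.swap) ?_ ?_ ?_
    · rintro ⟨a, b⟩ h
      simp only [mem_cEdg, Prod.swap] at h ⊢
      exact ⟨h.2.1, h.1, h.2.2.symm⟩
    · intro a _ b _ h
      exact Prod.swap_injective h
    · rintro ⟨a, b⟩ h
      simp only [mem_cEdg] at h
      exact ⟨(b, a), by simp only [mem_cEdg]; exact ⟨h.2.1, h.1, h.2.2.symm⟩, rfl⟩
  rw [cf, cf, h1, h2]

lemma cf_submod (G : SimpleGraph V) (A B X Y : Set V) (p q : V) (hp : p ∈ A) (hq : q ∈ B)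
    (hpq : G.Adj p q) (hpX : p ∉ X) (hqY : q ∉ Y) :
    cf G (A ∩ X) (B ∪ Y) + cf G (A ∪ X) (B ∩ Y) < cf G A B + cf G X Y := by
  classical
  have h1 : (cMiss (A ∩ X) (B ∪ Y)).card + (cMiss (A ∪ X) (B ∩ Y)).card ≤
      (cMiss A B).card + (cMiss X Y).card := by
    simp only [cMiss, Finset.card_filter, ← Finset.sum_add_distrib]
    refine Finset.sum_le_sum fun w _ => ?_
    by_cases w ∈ A <;> by_cases w ∈ B <;> by_cases w ∈ X <;> by_cases w ∈ Y <;> simp [*]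
  have h2 : (cEdg G (A ∩ X) (B ∪ Y)).card + (cEdg G (A ∪ X) (B ∩ Y)).card <
      (cEdg G A B).card + (cEdg G X Y).card := by
    simp only [cEdg, Finset.card_filter, ← Finset.sum_add_distrib]
    refine Finset.sum_lt_sum (fun w _ => ?_) ⟨(p, q), Finset.mem_univ _, ?_⟩
    · by_cases w.1 ∈ A <;> by_cases w.2 ∈ B <;> by_cases w.1 ∈ X <;> by_cases w.2 ∈ Y <;>
        by_cases G.Adj w.1 w.2 <;> simp [*]
    · simp [*]
  unfold cf
  omega

lemma weak_dual {G : SimpleGraph V} {T A B : Set V} {u v : V} (hc : ECut T A B u v) {k : ℕ}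
    (h : HasElemPaths G T u v k) : k ≤ cf G A B := by
  classical
  obtain ⟨P, -, hP⟩ := h
  have hex : ∀ i, ∃ z : V ⊕ (V × V), z ∈ (cMiss A B).disjSum (cEdg G A B) ∧
      Sum.elim (fun w => w ∈ (P i).support) (fun z => s(z.1, z.2) ∈ (P i).edges) z := by
    intro i
    obtain ⟨d, hd, hd1, hd2⟩ := (P i).exists_boundary_dart A hc.hu (fun h => hc.disj _ h hc.hv)
    by_cases hB : d.snd ∈ B
    · refine ⟨Sum.inr (d.fst, d.snd), ?_, ?_⟩
      · simp [mem_cEdg, hd1, hB, d.adj]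
      · exact List.mem_map.2 ⟨d, hd, rfl⟩
    · refine ⟨Sum.inl d.snd, ?_, ?_⟩
      · simp [mem_cMiss, hd2, hB]
      · exact (P i).dart_snd_mem_support_of_mem_darts hd
  choose z hz hzi using hex
  have hinj : Function.Injective z := by
    intro i j hij
    by_contra hne
    obtain ⟨hE, hV⟩ := hP i j hne
    have h1 := hzi i
    have h2 := hzi j
    have h3 := hz i
    rw [← hij] at h2
    rcases hzz : z i with w | e
    · rw [hzz] at h1 h2 h3
      simp only [Finset.inl_mem_disjSum, mem_cMiss] at h3
      rcases hV w h1 h2 with h | h | h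
      · rcases hc.cov w h with h | h
        · exact h3.1 h
        · exact h3.2 h
      · exact h3.1 (h ▸ hc.hu)
      · rw [Set.mem_singleton_iff] at h
        exact h3.2 (h ▸ hc.hv)
    · rw [hzz] at h1 h2
      exact hE _ h1 h2
  have := Finset.card_le_card_of_injOn (s := Finset.univ) z (fun i _ => hz i) hinj.injOn
  simpa [cf, Finset.card_disjSum] using this

/-- relation on elements -/
def elRel (G : SimpleGraph V) (T : Set V) : V ⊕ Sym2 V → V ⊕ Sym2 V → Prop
  | .inl _, .inl _ => False
  | .inl x, .inr e => x ∈ e ∧ e ∈ G.edgeSet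
  | .inr e, .inl x => x ∈ e ∧ x ∉ T
  | .inr e, .inr f => f ∈ G.edgeSet ∧ ∃ t ∈ T, t ∈ e ∧ t ∈ f

lemma paths_of_chains {G : SimpleGraph V} {T : Set V} {u v : V} (hu : u ∈ T) (hv : v ∈ T) {k : ℕ}
    (a : Fin k → V ⊕ Sym2 V) (g : V ⊕ Sym2 V → V ⊕ Sym2 V → Prop)
    (ha : ∀ i, ∃ e ∈ G.edgeSet, u ∈ e ∧ a i = Sum.inr e)
    (hg : ∀ x y, g x y → x = y ∨ elRel G T x y)
    (hb : ∀ i, ∃ e : Sym2 V, v ∈ e ∧ Relation.ReflTransGen g (a i) (Sum.inr e))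
    (hd : ∀ i j x, Relation.ReflTransGen g (a i) x → Relation.ReflTransGen g (a j) x → i = j) :
    HasElemPaths G T u v k := by
  classical
  have main : ∀ i, ∃ W : G.Walk u v, W.IsPath ∧
      (∀ e ∈ W.edges, Relation.ReflTransGen g (a i) (Sum.inr e)) ∧
      (∀ x ∈ W.support, x ∉ T → Relation.ReflTransGen g (a i) (Sum.inl x)) := by
    intro i
    let Q : V ⊕ Sym2 V → Prop := fun z => Relation.ReflTransGen g (a i) z
    let H : SimpleGraph V :=
      { Adj := fun x y => G.Adj x y ∧ Q (.inr s(x, y)) ∧ (x ∉ T → Q (.inl x)) ∧ (y ∉ T → Q (.inl y))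
        symm := ⟨fun x y h => ⟨h.1.symm, by rw [Sym2.eq_swap]; exact h.2.1, h.2.2.2, h.2.2.1⟩⟩
        loopless := ⟨fun x h => G.loopless.irrefl x h.1⟩ }
    have hHG : H ≤ G := fun x y h => h.1
    have step : ∀ (e : Sym2 V) (w x : V), e ∈ G.edgeSet → Q (.inr e) → w ∈ e → x ∈ e →
        (w ∉ T → Q (.inl w)) → (x ∉ T → Q (.inl x)) → H.Reachable u w → H.Reachable u x := by
      intro e w x he hQ hw hx hwQ hxQ hr
      by_cases hwx : w = x
      · exact hwx ▸ hr
      · have : e = s(w, x) := ((Sym2.mem_and_mem_iff hwx).1 ⟨hw, hx⟩)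
        subst this
        have hadj : H.Adj w x := ⟨he, hQ, hwQ, hxQ⟩
        exact hr.trans hadj.reachable
    let Inv : V ⊕ Sym2 V → Prop := Sum.elim (fun x => H.Reachable u x)
      (fun e => e ∈ G.edgeSet ∧ ∃ w ∈ e, (w ∉ T → Q (.inl w)) ∧ H.Reachable u w)
    have inv : ∀ z, Q z → Inv z := by
      intro z hz
      induction hz with
      | refl =>
        obtain ⟨e, he, hue, hae⟩ := ha i
        rw [hae]
        exact ⟨he, u, hue, fun h => absurd hu h, SimpleGraph.Reachable.refl _⟩
      | @tail y z hy hyz ih =>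
        have hQz : Q z := Relation.ReflTransGen.tail hy hyz
        rcases hg y z hyz with h | h
        · exact h ▸ ih
        rcases y with x | e <;> rcases z with y | f
        · exact h.elim
        · exact ⟨h.2, x, h.1, fun _ => hy, ih⟩
        · obtain ⟨he, w, hw, hwQ, hr⟩ := ih
          exact step e w y he hy hw h.1 hwQ (fun _ => hQz) hr
        · obtain ⟨he, w, hw, hwQ, hr⟩ := ih
          obtain ⟨hf, t, ht, hte, htf⟩ := h
          exact ⟨hf, t, htf, fun h => absurd ht h,
            step e w t he hy hw hte hwQ (fun h => absurd ht h) hr⟩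
    have hreach : H.Reachable u v := by
      obtain ⟨e, hve, hQ⟩ := hb i
      obtain ⟨he, w, hw, hwQ, hr⟩ := inv _ hQ
      exact step e w v he hQ hw hve hwQ (fun h => absurd hv h) hr
    obtain ⟨W, hW⟩ := hreach.exists_isPath
    have hsup : ∀ {x y : V} (W : H.Walk x y), (x ∉ T → Q (.inl x)) →
        ∀ z ∈ W.support, z ∉ T → Q (.inl z) := by
      intro x y W
      induction W with
      | nil => intro hx z hz; simp at hz; subst hz; exact hx
      | cons h p ih =>
        intro hx z hz
        rw [SimpleGraph.Walk.support_cons, List.mem_cons] at hz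
        rcases hz with rfl | hz
        · exact hx
        · exact ih h.2.2.2 z hz
    refine ⟨W.mapLe hHG, hW.mapLe hHG, ?_, ?_⟩
    · intro e he
      rw [SimpleGraph.Walk.edges_mapLe_eq_edges] at he
      have := W.edges_subset_edgeSet he
      induction e using Sym2.ind with
      | _ x y => exact (show H.Adj x y from this).2.1
    · intro x hx
      rw [SimpleGraph.Walk.support_mapLe_eq_support] at hx
      exact hsup W (fun h => absurd hu h) x hx
  choose P hP hE hS using main
  refine ⟨P, hP, fun i j hij => ⟨fun e he he' => hij (hd i j _ (hE i e he) (hE j e he')), ?_⟩⟩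
  intro x hx hx'
  by_contra h
  have hxT : x ∉ T := fun h' => h (Or.inl h')
  exact hij (hd i j _ (hS i x hx hxT) (hS j x hx' hxT))

lemma strong_dual {G : SimpleGraph V} {T : Set V} {u v : V} (hu : u ∈ T) (hv : v ∈ T)
    (huv : u ≠ v) {k : ℕ} (h : ¬ HasElemPaths G T u v k) :
    ∃ A B, ECut T A B u v ∧ CutNormal G T A B ∧ cf G A B < k := by
  classical
  by_contra hcon
  push Not at hcon
  apply h
  suffices hM : _ by
    obtain ⟨a, g, ha, hg, hb, hd⟩ := menger_aux (elRel G T)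
      {z | ∃ e ∈ G.edgeSet, u ∈ e ∧ z = Sum.inr e} {z | ∃ e : Sym2 V, v ∈ e ∧ z = Sum.inr e} k hM
    refine paths_of_chains hu hv a g ha hg ?_ hd
    intro i
    obtain ⟨b, ⟨e, he, rfl⟩, hr⟩ := hb i
    exact ⟨e, he, hr⟩
  intro S C hA hr hB
  let φ : V ⊕ Sym2 V → V ⊕ Sym2 V := Sum.elim Sum.inl
    (fun e => if h : ∃ x ∈ e, x ∉ T then Sum.inl h.choose else Sum.inr e)
  let C' := C.image φ
  let R : Set V := {w | (w ∈ T ∧ (w = u ∨ ∃ e, Sum.inr e ∈ S ∧ w ∈ e)) ∨ (w ∉ T ∧ Sum.inl w ∈ S)}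
  let M : Set V := {w | w ∉ T ∧ Sum.inl w ∈ C'}
  have hedge : ∀ a ∈ R \ M, ∀ b ∈ Rᶜ \ M, G.Adj a b → (a ∈ T ∧ b ∈ T) ∧ Sum.inr s(a, b) ∈ C' := by
    intro a ha b hb hab
    have he : Sum.inr s(a, b) ∈ S ∨ Sum.inr s(a, b) ∈ C := by
      rcases ha.1 with ⟨haT, rfl | ⟨e, heS, hae⟩⟩ | ⟨haT, haS⟩
      · exact hA _ ⟨s(a, b), hab, by simp, rfl⟩
      · exact hr _ heS (Sum.inr s(a, b)) ⟨hab, a, haT, hae, by simp⟩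
      · exact hr _ haS (Sum.inr s(a, b)) ⟨by simp, hab⟩
    have heC : Sum.inr s(a, b) ∈ C := by
      rcases he with he | he
      · exfalso
        by_cases hbT : b ∈ T
        · exact hb.1 (Or.inl ⟨hbT, Or.inr ⟨_, he, by simp⟩⟩)
        · rcases hr _ he (Sum.inl b) ⟨by simp, hbT⟩ with h | h
          · exact hb.1 (Or.inr ⟨hbT, h⟩)
          · exact hb.2 ⟨hbT, Finset.mem_image.2 ⟨_, h, rfl⟩⟩
      · exact he
    have hφ : φ (Sum.inr s(a, b)) ∈ C' := Finset.mem_image_of_mem _ heC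
    by_cases hx : ∃ x ∈ s(a, b), x ∉ T
    · exfalso
      have h1 : φ (Sum.inr s(a, b)) = Sum.inl hx.choose := by simp only [φ, Sum.elim_inr, dif_pos hx]
      have h2 := hx.choose_spec
      rw [h1] at hφ
      rcases Sym2.mem_iff.1 h2.1 with h3 | h3
      · rw [h3] at hφ h2; exact ha.2 ⟨h2.2, hφ⟩
      · rw [h3] at hφ h2; exact hb.2 ⟨h2.2, hφ⟩
    · have h1 : φ (Sum.inr s(a, b)) = Sum.inr s(a, b) := by simp only [φ, Sum.elim_inr, dif_neg hx]
      rw [h1] at hφ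
      push Not at hx
      exact ⟨⟨hx a (by simp), hx b (by simp)⟩, hφ⟩
  have hvR : v ∉ R := by
    rintro (⟨-, h | ⟨e, he, hve⟩⟩ | h)
    · exact huv h.symm
    · exact hB _ he ⟨e, hve, rfl⟩
    · exact h.1 hv
  have hk := hcon (R \ M) (Rᶜ \ M) ⟨fun w hw h' => h'.1 hw.1, fun t ht => by
      by_cases h : t ∈ R
      · exact Or.inl ⟨h, fun h => h.1 ht⟩
      · exact Or.inr ⟨h, fun h => h.1 ht⟩, ⟨Or.inl ⟨hu, Or.inl rfl⟩, fun h => h.1 hu⟩,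
      ⟨hvR, fun h => h.1 hv⟩⟩ (fun a ha b hb hab => (hedge a ha b hb hab).1)
  refine hk.trans (le_trans ?_ (Finset.card_image_le (s := C) (f := φ)))
  rw [cf, ← Finset.card_disjSum]
  refine Finset.card_le_card_of_injOn (Sum.map id (fun z => s(z.1, z.2))) ?_ ?_
  · rintro (w | ⟨a, b⟩) hw
    · have hw := mem_cMiss.1 (Finset.inl_mem_disjSum.1 hw)
      have : w ∈ M := by
        by_contra hM
        by_cases hR : w ∈ R
        · exact hw.1 ⟨hR, hM⟩
        · exact hw.2 ⟨hR, hM⟩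
      exact this.2
    · have hw := mem_cEdg.1 (Finset.inr_mem_disjSum.1 hw)
      exact (hedge a hw.1 b hw.2.1 hw.2.2).2
  · rintro (w | ⟨a, b⟩) hw (w' | ⟨a', b'⟩) hw' heq
    · simpa using heq
    · simp at heq
    · simp at heq
    · have hw := mem_cEdg.1 (Finset.inr_mem_disjSum.1 hw)
      have hw' := mem_cEdg.1 (Finset.inr_mem_disjSum.1 hw')
      simp only [Sum.map_inr, Sum.inr.injEq, Sym2.eq_iff] at heq
      rcases heq with ⟨rfl, rfl⟩ | ⟨rfl, rfl⟩
      · rfl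
      · exact absurd hw.1.1 hw'.2.1.1

lemma elemConn_spec (G : SimpleGraph V) {T : Set V} {u v : V} (huv : u ≠ v) :
    HasElemPaths G T u v (elemConn G T u v) ∧ ¬ HasElemPaths G T u v (elemConn G T u v + 1) := by
  have hb : BddAbove {k | HasElemPaths G T u v k} := by
    refine ⟨cf G {u} {u}ᶜ, fun k hk => weak_dual (A := {u}) (B := {u}ᶜ) ⟨?_, ?_, by simp, by simpa using huv.symm⟩ hk⟩
    · intro w hw h; exact h hw
    · intro t _; exact em _
  constructor
  · exact Nat.sSup_mem (s := {k | HasElemPaths G T u v k})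
      ⟨0, fun i => i.elim0, fun i => i.elim0, fun i => i.elim0⟩ hb
  · intro h
    have : elemConn G T u v + 1 ≤ elemConn G T u v := le_csSup hb h
    omega

lemma conn_le {G : SimpleGraph V} {T A B : Set V} {u v : V} (hc : ECut T A B u v) :
    elemConn G T u v ≤ cf G A B :=
  weak_dual hc (elemConn_spec G (fun h : u = v => hc.disj u hc.hu (h ▸ hc.hv))).1

lemma conn_cut (G : SimpleGraph V) {T : Set V} {u v : V} (hu : u ∈ T) (hv : v ∈ T)
    (huv : u ≠ v) :
    ∃ A B, ECut T A B u v ∧ CutNormal G T A B ∧ cf G A B ≤ elemConn G T u v := by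
  obtain ⟨A, B, h1, h2, h3⟩ := strong_dual hu hv huv (elemConn_spec G (T := T) huv).2
  exact ⟨A, B, h1, h2, by omega⟩

lemma del_le (G : SimpleGraph V) {T : Set V} {u v : V} (p q : V) (hu : u ∈ T) (hv : v ∈ T)
    (huv : u ≠ v) : elemConn (G.deleteEdges {s(p, q)}) T u v ≤ elemConn G T u v := by
  obtain ⟨A, B, h1, h2, h3⟩ := conn_cut G hu hv huv
  refine (conn_le h1).trans (le_trans ?_ h3)
  refine Nat.add_le_add_left (Finset.card_le_card fun z hz => ?_) _
  rw [mem_cEdg] at hz ⊢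
  exact ⟨hz.1, hz.2.1, (G.deleteEdges_le _) hz.2.2⟩

lemma del_fail (G : SimpleGraph V) {T : Set V} {u v : V} (p q : V) (hu : u ∈ T) (hv : v ∈ T)
    (huv : u ≠ v) (h : elemConn (G.deleteEdges {s(p, q)}) T u v < elemConn G T u v) :
    ∃ A B, ECut T A B u v ∧ cf G A B ≤ elemConn G T u v ∧
      ((p ∈ A ∧ q ∈ B) ∨ (q ∈ A ∧ p ∈ B)) := by
  classical
  obtain ⟨A, B, h1, h2, h3⟩ := conn_cut (G.deleteEdges {s(p, q)}) hu hv huv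
  have h4 := conn_le (G := G) h1
  have gen : ∀ s t : V, ¬ (p ∈ A ∧ q ∈ B ∧ ¬ (s = p ∧ t = q)) →
      ¬ (q ∈ A ∧ p ∈ B ∧ ¬ (s = q ∧ t = p)) →
      cEdg G A B ⊆ insert (s, t) (cEdg (G.deleteEdges {s(p, q)}) A B) := by
    intro s t hn1 hn2 z hz
    obtain ⟨a, b⟩ := z
    rw [Finset.mem_insert, mem_cEdg]
    rw [mem_cEdg] at hz
    obtain ⟨ha, hb, hab⟩ := hz
    simp only [SimpleGraph.deleteEdges_adj, Set.mem_singleton_iff, Sym2.eq_iff] at *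
    grind
  refine ⟨A, B, h1, ?_, ?_⟩
  · have : ∃ s t, ¬ (p ∈ A ∧ q ∈ B ∧ ¬ (s = p ∧ t = q)) ∧ ¬ (q ∈ A ∧ p ∈ B ∧ ¬ (s = q ∧ t = p)) := by
      by_cases hpA : p ∈ A
      · exact ⟨p, q, by tauto, fun h => h1.disj p hpA h.2.1⟩
      · exact ⟨q, p, by tauto, by tauto⟩
    obtain ⟨s, t, hs, ht⟩ := this
    have := Finset.card_le_card (gen s t hs ht)
    have := this.trans (Finset.card_insert_le _ _)
    unfold cf at *
    omega
  · by_contra hcon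
    push Not at hcon
    have : cEdg G A B ⊆ cEdg (G.deleteEdges {s(p, q)}) A B := by
      rintro ⟨a, b⟩ hz
      rw [mem_cEdg] at hz ⊢
      refine ⟨hz.1, hz.2.1, ?_⟩
      simp only [SimpleGraph.deleteEdges_adj, Set.mem_singleton_iff, Sym2.eq_iff] at *
      grind
    have := Finset.card_le_card this
    unfold cf at *
    omega

variable [DecidableEq V]

lemma contract_adj_iff {G : SimpleGraph V} {p q a b : V} :
    (contractEdge G p q).Adj a b ↔ a ≠ b ∧ ∃ x y, G.Adj x y ∧
      (if x = q then p else x) = a ∧ (if y = q then p else y) = b := by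
  unfold contractEdge
  rw [SimpleGraph.fromRel_adj]
  refine and_congr_right fun _ => ⟨?_, Or.inl⟩
  rintro (h | ⟨x, y, h, h1, h2⟩)
  · exact h
  · exact ⟨y, x, h.symm, h2, h1⟩

lemma contract_le (G : SimpleGraph V) {T : Set V} {u v : V} {p q : V} (hp : p ∉ T) (hq : q ∉ T)
    (hpq : G.Adj p q) (hu : u ∈ T) (hv : v ∈ T)
    (huv : u ≠ v) : elemConn (contractEdge G p q) T u v ≤ elemConn G T u v := by
  obtain ⟨A, B, h1, h2, h3⟩ := conn_cut G hu hv huv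
  have hne := hpq.ne
  have hT : ∀ t ∈ T, t ≠ p ∧ t ≠ q := fun t ht => ⟨fun h => hp (h ▸ ht), fun h => hq (h ▸ ht)⟩
  have hc : ECut T {w | (w ∈ A ∧ (w = p → q ∈ A)) ∨ w = q} {w | w ≠ q ∧ w ∈ B ∧ (w = p → q ∈ B)}
      u v := by
    refine ⟨?_, ?_, ?_, ?_⟩
    · rintro w (h | h) h'
      · exact h1.disj w h.1 h'.2.1
      · exact h'.1 h
    · intro t ht
      rcases h1.cov t ht with h | h
      · exact Or.inl (Or.inl ⟨h, fun h' => absurd h' (hT t ht).1⟩)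
      · exact Or.inr ⟨(hT t ht).2, h, fun h' => absurd h' (hT t ht).1⟩
    · exact Or.inl ⟨h1.hu, fun h' => absurd h' (hT u hu).1⟩
    · exact ⟨(hT v hv).2, h1.hv, fun h' => absurd h' (hT v hv).1⟩
  refine (conn_le hc).trans (le_trans ?_ h3)
  refine Nat.add_le_add ?_ (Finset.card_le_card ?_)
  · refine le_trans (Finset.card_le_card ?_)
      (Finset.card_image_le (s := cMiss A B) (f := fun w => if w = q then p else w))
    intro w hw
    simp only [mem_cMiss, Set.mem_ofPred_eq, Finset.mem_image] at hw ⊢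
    have e1 := h2 p
    have e2 := h2 q
    have e3 := hpq.symm
    by_cases hwp : w = p
    · subst hwp
      by_cases hm : w ∉ A ∧ w ∉ B
      · exact ⟨w, hm, by simp [hne]⟩
      · refine ⟨q, ?_, by simp⟩
        grind
    · refine ⟨w, ?_, ?_⟩ <;> grind
  · rintro ⟨a, b⟩ hz
    simp only [mem_cEdg, Set.mem_ofPred_eq, contract_adj_iff] at hz ⊢
    obtain ⟨ha, hb, hab, x, y, hxy, rfl, rfl⟩ := hz
    have hx : x ∈ A := by grind
    have hy : y ∈ B := by grind
    have := h2 x hx y hy hxy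
    have hx' := (hT x this.1).2
    have hy' := (hT y this.2).2
    simp [hx', hy', hx, hy, hxy]

lemma contract_lift {G : SimpleGraph V} {T A B : Set V} {u v : V} {p q : V} (hp : p ∉ T)
    (hq : q ∉ T) (hu : u ∈ T) (hv : v ∈ T) (hne : p ≠ q)
    (h1 : ECut T A B u v) (h2 : CutNormal (contractEdge G p q) T A B) (hpA : p ∈ A) :
    ∃ A' B', ECut T A' B' u v ∧ cf G A' B' ≤ cf (contractEdge G p q) A B := by
  have hT : ∀ t ∈ T, t ≠ p ∧ t ≠ q := fun t ht => ⟨fun h => hp (h ▸ ht), fun h => hq (h ▸ ht)⟩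
  refine ⟨{w | w ∈ A ∨ w = q}, {w | w ∈ B ∧ w ≠ q}, ⟨?_, ?_, ?_, ?_⟩, ?_⟩
  · rintro w (h | h) h'
    · exact h1.disj w h h'.1
    · exact h'.2 h
  · intro t ht
    rcases h1.cov t ht with h | h
    · exact Or.inl (Or.inl h)
    · exact Or.inr ⟨h, (hT t ht).2⟩
  · exact Or.inl h1.hu
  · exact ⟨h1.hv, (hT v hv).2⟩
  refine Nat.add_le_add (Finset.card_le_card ?_) (Finset.card_le_card ?_)
  · intro w hw
    simp only [mem_cMiss, Set.mem_ofPred_eq] at hw ⊢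
    tauto
  · rintro ⟨a, b⟩ hz
    simp only [mem_cEdg, Set.mem_ofPred_eq] at hz ⊢
    obtain ⟨ha, hb, hab⟩ := hz
    have hbp : b ≠ p := fun h => h1.disj p hpA (h ▸ hb.1)
    have hadj : (contractEdge G p q).Adj (if a = q then p else a) b := by
      rw [contract_adj_iff]
      refine ⟨?_, a, b, hab, rfl, by simp [hb.2]⟩
      split_ifs
      · exact hbp.symm
      · exact hab.ne
    by_cases haq : a = q
    · rw [if_pos haq] at hadj
      exact absurd (h2 p hpA b hb.1 hadj).1 hp
    · rw [if_neg haq] at hadj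
      exact ⟨ha.resolve_right haq, hb.1, hadj⟩

lemma contract_fail (G : SimpleGraph V) {T : Set V} {u v : V} {p q : V} (hp : p ∉ T) (hq : q ∉ T)
    (hpq : G.Adj p q) (hu : u ∈ T) (hv : v ∈ T) (huv : u ≠ v)
    (h : elemConn (contractEdge G p q) T u v < elemConn G T u v) :
    ∃ A B, ECut T A B u v ∧ cf G A B ≤ elemConn G T u v ∧
      p ∉ A ∧ p ∉ B ∧ q ∉ A ∧ q ∉ B := by
  obtain ⟨A, B, h1, h2, h3⟩ := conn_cut (contractEdge G p q) hu hv huv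
  have hT : ∀ t ∈ T, t ≠ p ∧ t ≠ q := fun t ht => ⟨fun h => hp (h ▸ ht), fun h => hq (h ▸ ht)⟩
  have hpA : p ∉ A := by
    intro hpA
    obtain ⟨A', B', h4, h5⟩ := contract_lift (G := G) hp hq hu hv hpq.ne h1 h2 hpA
    have := conn_le (G := G) h4
    omega
  have hpB : p ∉ B := by
    intro hpB
    obtain ⟨A', B', h4, h5⟩ := contract_lift (G := G) hp hq hv hu hpq.ne h1.swap
      (fun a ha b hb hab => (h2 b hb a ha hab.symm).symm) hpB
    have := conn_le (G := G) h4.swap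
    rw [cf_swap] at this
    rw [cf_swap _ B A] at h5
    omega
  refine ⟨A \ {q}, B \ {q}, ⟨?_, ?_, ?_, ?_⟩, ?_, fun h => hpA h.1, fun h => hpB h.1,
    fun h => h.2 rfl, fun h => h.2 rfl⟩
  · exact fun w hw h' => h1.disj w hw.1 h'.1
  · intro t ht
    rcases h1.cov t ht with h | h
    · exact Or.inl ⟨h, (hT t ht).2⟩
    · exact Or.inr ⟨h, (hT t ht).2⟩
  · exact ⟨h1.hu, (hT u hu).2⟩
  · exact ⟨h1.hv, (hT v hv).2⟩
  have e1 : cMiss (A \ {q}) (B \ {q}) ⊆ insert q (cMiss A B) := by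
    intro w hw
    simp only [mem_cMiss, Finset.mem_insert, Set.mem_sdiff, Set.mem_singleton_iff] at hw ⊢
    tauto
  have e2 : cEdg G (A \ {q}) (B \ {q}) ⊆ cEdg (contractEdge G p q) A B := by
    rintro ⟨a, b⟩ hz
    simp only [mem_cEdg, Set.mem_sdiff, Set.mem_singleton_iff] at hz ⊢
    obtain ⟨ha, hb, hab⟩ := hz
    refine ⟨ha.1, hb.1, contract_adj_iff.2 ⟨hab.ne, a, b, hab, by simp [ha.2], by simp [hb.2]⟩⟩
  have e3 := (Finset.card_le_card e1).trans (Finset.card_insert_le _ _)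
  have e4 := Finset.card_le_card e2
  unfold cf at *
  omega

end

lemma ECut.cross {V : Type*} {T A B X Y : Set V} {u v x y a b : V} (h : ECut T A B u v)
    (h' : ECut T X Y x y) (ha : a ∈ A ∩ X) (hb : b ∈ B ∪ Y) : ECut T (A ∩ X) (B ∪ Y) a b := by
  refine ⟨?_, ?_, ha, hb⟩
  · rintro w hw (h1 | h1)
    · exact h.disj w hw.1 h1
    · exact h'.disj w hw.2 h1
  · intro t ht
    rcases h.cov t ht with h1 | h1
    · rcases h'.cov t ht with h2 | h2
      · exact Or.inl ⟨h1, h2⟩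
      · exact Or.inr (Or.inr h2)
    · exact Or.inr (Or.inl h1)

lemma elemConn_comm' {V : Type*} [Fintype V] (G : SimpleGraph V) {T : Set V} {u v : V}
    (hu : u ∈ T) (hv : v ∈ T) (huv : u ≠ v) : elemConn G T u v ≤ elemConn G T v u := by
  obtain ⟨A, B, h1, -, h3⟩ := conn_cut G hv hu huv.symm
  have := conn_le (G := G) h1.swap
  rw [cf_swap] at this
  omega

/-- the final uncrossing -/
lemma uncross {V : Type*} [Fintype V] (G : SimpleGraph V) {T A B X Y : Set V} {u v x y p q : V}
    (hu : u ∈ T) (hv : v ∈ T) (huv : u ≠ v) (hx : x ∈ T) (hy : y ∈ T) (hxy : x ≠ y)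
    (h : ECut T A B u v) (h' : ECut T X Y x y) (hf : cf G A B ≤ elemConn G T u v)
    (hf' : cf G X Y ≤ elemConn G T x y) (hp : p ∈ A) (hq : q ∈ B) (hpq : G.Adj p q)
    (hpX : p ∉ X) (hpY : p ∉ Y) (hqX : q ∉ X) (hqY : q ∉ Y) : False := by
  have s1 := cf_submod G A B X Y p q hp hq hpq hpX hqY
  have s2 := cf_submod G A B Y X p q hp hq hpq hpY hqX
  rw [cf_swap G Y X] at s2
  rw [cf_swap G (A ∪ X), ] at s1
  rw [cf_swap G (A ∪ Y)] at s2
  rw [Set.union_comm A X] at s1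
  rw [Set.union_comm A Y] at s2
  have c1 : ∀ a b, a ∈ A ∩ X → b ∈ B ∪ Y → elemConn G T a b ≤ cf G (A ∩ X) (B ∪ Y) :=
    fun a b ha hb => conn_le (h.cross h' ha hb)
  have c2 : ∀ a b, a ∈ B ∩ Y → b ∈ X ∪ A → elemConn G T a b ≤ cf G (B ∩ Y) (X ∪ A) :=
    fun a b ha hb => by
      rw [Set.union_comm] at hb ⊢
      exact conn_le (h.swap.cross h'.swap ha hb)
  have c3 : ∀ a b, a ∈ A ∩ Y → b ∈ B ∪ X → elemConn G T a b ≤ cf G (A ∩ Y) (B ∪ X) :=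
    fun a b ha hb => conn_le (h.cross h'.swap ha hb)
  have c4 : ∀ a b, a ∈ B ∩ X → b ∈ Y ∪ A → elemConn G T a b ≤ cf G (B ∩ X) (Y ∪ A) :=
    fun a b ha hb => by
      rw [Set.union_comm] at hb ⊢
      exact conn_le (h.swap.cross h' ha hb)
  have k1 := elemConn_comm' G hu hv huv
  have k2 := elemConn_comm' G hx hy hxy
  have m1 := h.hu
  have m2 := h.hv
  have m3 := h'.hu
  have m4 := h'.hv
  have d1 := c1 u v
  have d2 := c1 x y
  have d3 := c2 v u
  have d4 := c2 y x
  have d5 := c3 u v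
  have d6 := c3 y x
  have d7 := c4 v u
  have d8 := c4 x y
  simp only [Set.mem_inter_iff, Set.mem_union] at d1 d2 d3 d4 d5 d6 d7 d8
  simp only [m1, m2, m3, m4, true_and, and_true, or_true, true_or, forall_const]
    at d1 d2 d3 d4 d5 d6 d7 d8
  rcases h'.cov u hu with e1 | e1 <;> rcases h'.cov v hv with e2 | e2 <;>
    rcases h.cov x hx with e3 | e3 <;> rcases h.cov y hy with e4 | e4 <;>
    simp only [e1, e2, e3, e4, true_or, or_true, forall_const] at d1 d2 d3 d4 d5 d6 d7 d8 <;>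
    omega

/-- **The Reduction Lemma.** For any edge `pq` of `G` between two non-terminals,
either deleting `pq` preserves all pairwise element-connectivities of the terminals,
or contracting `pq` does. -/
theorem reduction_lemma {V : Type*} [Fintype V] [DecidableEq V]
    (G : SimpleGraph V) (T : Set V) (p q : V)
    (hp : p ∉ T) (hq : q ∉ T) (hpq : G.Adj p q) :
    (∀ u ∈ T, ∀ v ∈ T, u ≠ v →
        elemConn (G.deleteEdges {s(p, q)}) T u v = elemConn G T u v) ∨
    (∀ u ∈ T, ∀ v ∈ T, u ≠ v →
        elemConn (contractEdge G p q) T u v = elemConn G T u v) := by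
  by_contra hcon
  push Not at hcon
  obtain ⟨⟨u, hu, v, hv, huv, h1⟩, ⟨x, hx, y, hy, hxy, h2⟩⟩ := hcon
  obtain ⟨A, B, hc, hf, hd⟩ := del_fail G p q hu hv huv
    (lt_of_le_of_ne (del_le G p q hu hv huv) h1)
  obtain ⟨X, Y, hc', hf', e1, e2, e3, e4⟩ := contract_fail G hp hq hpq hx hy hxy
    (lt_of_le_of_ne (contract_le G hp hq hpq hx hy hxy) h2)
  rcases hd with hd | hd
  · exact uncross G hu hv huv hx hy hxy hc hc' hf hf' hd.1 hd.2 hpq e1 e2 e3 e4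
  · exact uncross G hu hv huv hx hy hxy hc hc' hf hf' hd.1 hd.2 hpq.symm e3 e4 e1 e2
end

section
/- Let G=(V,E) be an undirected graph and T ⊆ V a set of terminals such that κ'_G(u,v) ≥ k for every pair u,v ∈ T. Let pq be any edge of G with p,q ∈ V∖T, and let G₁ = G − pq and G₂ = G/pq. Then κ'_{G₁}(u,v) ≥ k for all u,v ∈ T, or κ'_{G₂}(u,v) ≥ k for all u,v ∈ T. -/
open SimpleGraph

def MSep {V : Type*} (G : SimpleGraph V) (A B : Set V) (S : Set V) : Prop :=
  ∀ a ∈ A, ∀ b ∈ B, ∀ w : G.Walk a b, ∃ z ∈ S, z ∈ w.support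

def MAv {V : Type*} (G : SimpleGraph V) (A : Set V) (S : Set V) (z : V) : Prop :=
  ∃ a ∈ A, ∃ w : G.Walk a z, ∀ u ∈ w.support, u ∉ S

def MLinked {V : Type*} (G : SimpleGraph V) (A B : Set V) (k : ℕ) : Prop :=
  ∃ (f g : Fin k → V) (w : ∀ i, G.Walk (f i) (g i)), (∀ i, f i ∈ A) ∧ (∀ i, g i ∈ B) ∧
    (∀ i, (w i).IsPath) ∧ ∀ i j z, z ∈ (w i).support → z ∈ (w j).support → i = j

lemma MSep.symm {V : Type*} {G : SimpleGraph V} {A B S : Set V} (h : MSep G A B S) :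
    MSep G B A S := by
  intro b hb a ha w
  obtain ⟨z, hz, hw⟩ := h a ha b hb w.reverse
  exact ⟨z, hz, by simpa using hw⟩

lemma MAv.step {V : Type*} {G : SimpleGraph V} {A S : Set V} {z y : V} (h : MAv G A S z)
    (hzy : G.Adj z y) (hy : y ∉ S) : MAv G A S y := by
  obtain ⟨a, ha, w, hw⟩ := h
  refine ⟨a, ha, w.concat hzy, ?_⟩
  intro u hu
  rw [Walk.support_concat] at hu
  simp at hu
  rcases hu with hu | rfl
  · exact hw u hu
  · exact hy

lemma MAv.mem_support {V : Type*} {G : SimpleGraph V} {A S : Set V} {a z y : V} (ha : a ∈ A)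
    (w : G.Walk a z) (hw : ∀ u ∈ w.support, u ∉ S) (hy : y ∈ w.support) : MAv G A S y := by
  classical
  exact ⟨a, ha, w.takeUntil y hy, fun u hu => hw u (w.support_takeUntil_subset_support hy hu)⟩

lemma msep_aux {V : Type*} {G : SimpleGraph V} {A B S Z : Set V} {x y : V}
    (hS : MSep (G.deleteEdges {s(x, y)}) A B S)
    (hy : ¬ MAv (G.deleteEdges {s(x, y)}) A S y)
    (hZ : MSep (G.deleteEdges {s(x, y)}) A (insert x S) Z) : MSep G A B Z := by
  intro a ha b hb w
  by_contra hcon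
  push Not at hcon
  have hcon' : ∀ u ∈ w.support, u ∉ Z := fun u hu huZ => hcon u huZ hu
  set G' := G.deleteEdges {s(x, y)} with hG'
  have hdisj : ∀ z, MAv G' A Z z → z ∉ insert x S := by
    rintro z ⟨a', ha', w', hw'⟩ hz
    obtain ⟨u, hu, hu'⟩ := hZ a' ha' z hz w'
    exact hw' u hu' hu
  obtain ⟨d, hd, h1, h2⟩ := w.exists_boundary_dart {z | MAv G' A Z z}
    ⟨a, ha, Walk.nil, by simpa using hcon' a w.start_mem_support⟩ (by
      rintro ⟨a', ha', w', hw'⟩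
      obtain ⟨u, hu, hu'⟩ := hS a' ha' b hb w'
      exact hdisj u (MAv.mem_support ha' w' hw' hu') (Set.mem_insert_of_mem _ hu))
  have hde : s(d.fst, d.snd) = s(x, y) := by
    by_contra hne
    exact h2 (MAv.step h1 (by simp only [hG', deleteEdges_adj]; exact ⟨d.adj, hne⟩)
      (hcon' _ (w.dart_snd_mem_support_of_mem_darts hd)))
  have hx : d.fst ≠ x := fun h => hdisj _ h1 (by simp [h])
  have hdy : d.fst = y := by
    rw [Sym2.eq_iff] at hde
    rcases hde with h | h
    · exact absurd h.1 hx
    · exact h.1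
  rw [hdy] at h1
  obtain ⟨a', ha', w', hw'⟩ := h1
  exact hy ⟨a', ha', w', fun u hu huS => hdisj u (MAv.mem_support ha' w' hw' hu)
    (Set.mem_insert_of_mem _ huS)⟩

lemma MLinked.mono {V : Type*} {G G' : SimpleGraph V} (h : G' ≤ G) {A B : Set V} {k : ℕ}
    (hl : MLinked G' A B k) : MLinked G A B k := by
  obtain ⟨f, g, w, hf, hg, hp, hd⟩ := hl
  exact ⟨f, g, fun i => (w i).mapLe h, hf, hg, fun i => (hp i).mapLe h, fun i j z hi hj =>
    hd i j z (by simpa using hi) (by simpa using hj)⟩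

lemma mlinked_surj {V : Type*} {k : ℕ} (S : Finset V) (hS : S.card = k) (g : Fin k → V)
    (hg : ∀ i, g i ∈ S) (hinj : Function.Injective g) : ∀ s ∈ S, ∃ i, g i = s := by
  classical
  have : Finset.univ.image g = S := by
    apply Finset.eq_of_subset_of_card_le
    · intro s hs
      simp at hs
      obtain ⟨i, rfl⟩ := hs
      exact hg i
    · rw [Finset.card_image_of_injective _ hinj, hS]; simp
  intro s hs
  rw [← this] at hs
  simpa using hs

lemma mcombine {V : Type*} {G : SimpleGraph V} {A B : Set V} {k : ℕ} {S : Finset V} {x y : V}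
    (hxy : G.Adj x y) [DecidableEq V]
    (hS : MSep (G.deleteEdges {s(x, y)}) A B S)
    (hcx : (insert x S).card = k) (hcy : (insert y S).card = k) (hxS : x ∉ S) (hyS : y ∉ S)
    (h1 : MLinked (G.deleteEdges {s(x, y)}) A (insert x (S : Set V)) k)
    (h2 : MLinked (G.deleteEdges {s(x, y)}) (insert y (S : Set V)) B k) :
    MLinked G A B k := by
  obtain ⟨f, g, w, hf, hg, hp, hd⟩ := h1
  obtain ⟨f', g', w', hf', hg', hp', hd'⟩ := h2
  have ginj : Function.Injective g := fun i j hij =>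
    hd i j (g i) (w i).end_mem_support (by rw [hij]; exact (w j).end_mem_support)
  have finj : Function.Injective f' := fun i j hij =>
    hd' i j (f' i) (w' i).start_mem_support (by rw [hij]; exact (w' j).start_mem_support)
  have gsurj := mlinked_surj _ hcx g (fun i => by simpa using hg i) ginj
  have fsurj := mlinked_surj _ hcy f' (fun i => by simpa using hf' i) finj
  have hstep : ∀ i, ∃ j, (g i ∈ S ∧ f' j = g i) ∨ (g i = x ∧ f' j = y) := by
    intro i
    rcases hg i with h | h
    · obtain ⟨j, hj⟩ := fsurj y (by simp)
      exact ⟨j, Or.inr ⟨h, hj⟩⟩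
    · obtain ⟨j, hj⟩ := fsurj (g i) (by simpa using Or.inr h)
      exact ⟨j, Or.inl ⟨h, hj⟩⟩
  choose σ hσ using hstep
  have σinj : Function.Injective σ := by
    intro i j hij
    apply ginj
    have h1 := hσ i
    have h2 := hσ j
    rw [hij] at h1
    grind
  have key : ∀ i j z, z ∈ (w i).support → z ∈ (w' j).support → j = σ i := by
    intro i j z hz hz'
    obtain ⟨u, hu, hu'⟩ := hS _ (hf i) _ (hg' j)
      (((w i).takeUntil z hz).append
        ((w' j).reverse.takeUntil z (by simpa using hz')).reverse)
    have hpre : ∀ u ∈ S, u ∈ (w i).support → u = g i := by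
      intro u hu hui
      obtain ⟨i', rfl⟩ := gsurj u (by simp [hu])
      rw [hd i i' (g i') hui (w i').end_mem_support]
    have hsuf : ∀ u ∈ S, u ∈ (w' j).support → u = f' j := by
      intro u hu hui
      obtain ⟨i', rfl⟩ := fsurj u (by simp [hu])
      rw [hd' j i' (f' i') hui (w' i').start_mem_support]
    have huS : u ∈ S := hu
    have hfin : g i = f' j → g i ∈ S → j = σ i := by
      intro h hs
      apply finj
      have := hσ i
      grind
    rw [Walk.mem_support_append_iff] at hu'
    rcases hu' with h | h
    · have e := hpre u huS ((w i).support_takeUntil_subset_support hz h)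
      have hz2 : z = g i := by
        by_contra hne
        subst e
        exact Walk.endpoint_notMem_support_takeUntil (hp i) hz (Ne.symm hne) h
      subst e
      exact hfin (hsuf _ huS (hz2 ▸ hz')) huS
    · have e := hsuf u huS (by
        rw [Walk.support_reverse, List.mem_reverse] at h
        simpa using (w' j).reverse.support_takeUntil_subset_support _ h)
      have hz2 : z = f' j := by
        by_contra hne
        subst e
        exact Walk.endpoint_notMem_support_takeUntil (hp' j).reverse (by simpa using hz')
          (Ne.symm hne) (by simpa using h)
      subst e
      have := hpre _ huS (hz2 ▸ hz)
      exact hfin this.symm (this ▸ huS)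
  have hle : G.deleteEdges {s(x, y)} ≤ G := deleteEdges_le _
  have hW : ∀ i, ∃ W : G.Walk (f i) (g' (σ i)), W.IsPath ∧
      ∀ z ∈ W.support, z ∈ (w i).support ∨ z ∈ (w' (σ i)).support := by
    intro i
    suffices h : ∃ W : G.Walk (f i) (g' (σ i)), 
      ∀ z ∈ W.support, z ∈ (w i).support ∨ z ∈ (w' (σ i)).support by
      obtain ⟨W, hW⟩ := h
      exact ⟨W.bypass, W.bypass_isPath, fun z hz => hW z (W.support_bypass_subset_support hz)⟩
    rcases hσ i with ⟨_, h⟩ | ⟨h1, h2⟩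
    · refine ⟨((w i).mapLe hle).append (((w' (σ i)).mapLe hle).copy h rfl), ?_⟩
      intro z hz
      simpa [Walk.mem_support_append_iff] using hz
    · have hadj : G.Adj (g i) (f' (σ i)) := by rw [h1, h2]; exact hxy
      refine ⟨((w i).mapLe hle).append (Walk.cons hadj ((w' (σ i)).mapLe hle)), ?_⟩
      intro z hz
      rw [Walk.mem_support_append_iff] at hz
      simp at hz
      rcases hz with h | rfl | h
      · exact Or.inl h
      · exact Or.inl (w i).end_mem_support
      · exact Or.inr h
  choose W hWp hW using hW
  refine ⟨f, fun i => g' (σ i), W, hf, fun i => hg' _, hWp, ?_⟩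
  intro i j z hi hj
  rcases hW i z hi with h1 | h1 <;> rcases hW j z hj with h2 | h2
  · exact hd i j z h1 h2
  · exact (σinj (key i _ z h1 h2)).symm
  · exact σinj (key j _ z h2 h1)
  · exact σinj (hd' _ _ z h1 h2)

theorem menger_aux_s1 {V : Type*} [Fintype V] (n : ℕ) : ∀ (G : SimpleGraph V) (A B : Set V) (k : ℕ),
    G.edgeSet.ncard = n →
    (∀ S : Finset V, MSep G A B S → k ≤ S.card) → MLinked G A B k := by
  classical
  induction n using Nat.strong_induction_on with
  | _ n ih =>
  intro G A B k hn hk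
  by_cases hE : G = ⊥
  · subst hE
    have hc : k ≤ (Finset.univ.filter (fun z => z ∈ A ∧ z ∈ B)).card := by
      apply hk
      intro a ha b hb w
      cases w with
      | nil => exact ⟨a, by simp [ha, hb], by simp⟩
      | cons h _ => exact absurd h (by simp)
    obtain ⟨t, ht, htc⟩ := Finset.exists_subset_card_eq hc
    let e := (t.equivFinOfCardEq htc).symm
    have he : ∀ i, ((e i : V) ∈ A ∧ (e i : V) ∈ B) := fun i => by
      have := ht (e i).2
      simpa using this
    refine ⟨fun i => e i, fun i => e i, fun i => Walk.nil, fun i => (he i).1, fun i => (he i).2,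
      by simp, ?_⟩
    intro i j z hi hj
    simp at hi hj
    exact e.injective (Subtype.ext (hi.symm.trans hj))
  · obtain ⟨x₀, y₀, hxy₀⟩ : ∃ x y, G.Adj x y := by
      by_contra h
      push Not at h
      exact hE (by ext a b; simp [h])
    have hlt : (G.deleteEdges {s(x₀, y₀)}).edgeSet.ncard < n := by
      rw [← hn]
      apply Set.ncard_lt_ncard _ (Set.toFinite _)
      rw [edgeSet_deleteEdges]
      exact Set.sdiff_singleton_ssubset.2 hxy₀
    have hle : G.deleteEdges {s(x₀, y₀)} ≤ G := deleteEdges_le _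
    by_cases hall : ∀ S : Finset V, MSep (G.deleteEdges {s(x₀, y₀)}) A B S → k ≤ S.card
    · exact (ih _ hlt _ A B k rfl hall).mono hle
    push Not at hall
    obtain ⟨S, hS, hSk⟩ := hall
    have hnS : ¬ MSep G A B S := fun h => absurd (hk S h) (by omega)
    unfold MSep at hnS
    push Not at hnS
    obtain ⟨a, ha, b, hb, w, hw⟩ := hnS
    have hw' : ∀ u ∈ w.support, u ∉ S := fun u hu huS => hw u huS hu
    obtain ⟨d, hd, h1, h2⟩ := w.exists_boundary_dart {z | MAv (G.deleteEdges {s(x₀, y₀)}) A S z}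
      ⟨a, ha, Walk.nil, by simpa using hw' a w.start_mem_support⟩ (by
        rintro ⟨a', ha', w', hw'⟩
        obtain ⟨u, hu, hu'⟩ := hS a' ha' b hb w'
        exact hw' u hu' hu)
    have hde : s(d.fst, d.snd) = s(x₀, y₀) := by
      by_contra hne
      exact h2 (MAv.step h1 (by simp only [deleteEdges_adj]; exact ⟨d.adj, hne⟩)
        (hw' _ (w.dart_snd_mem_support_of_mem_darts hd)))
    have hxy : G.Adj d.fst d.snd := d.adj
    generalize d.fst = x at *
    generalize d.snd = y at *
    rw [← hde] at hS h1 h2 hlt hle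
    have hxnot : ¬ MAv (G.deleteEdges {s(x, y)}) B S x := by
      rintro ⟨b', hb', w2, hw2⟩
      obtain ⟨a', ha', w1, hw1⟩ := h1
      obtain ⟨u, hu, hu'⟩ := hS a' ha' b' hb' (w1.append w2.reverse)
      rw [Walk.mem_support_append_iff] at hu'
      rcases hu' with h | h
      · exact hw1 u h hu
      · exact hw2 u (by simpa using h) hu
    have hins : ∀ v, (v = x ∨ v = y) → MSep G A B (insert v S : Finset V) := by
      intro v hv a ha b hb w
      by_cases he : s(x, y) ∈ w.edges
      · refine ⟨v, by simp, ?_⟩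
        rcases hv with rfl | rfl
        · exact w.fst_mem_support_of_mem_edges he
        · exact w.snd_mem_support_of_mem_edges he
      · obtain ⟨u, hu, hu'⟩ := hS a ha b hb (w.toDeleteEdge _ he)
        refine ⟨u, by simpa using Or.inr hu, ?_⟩
        simpa using hu'
    have hcx := hk _ (hins x (Or.inl rfl))
    have hcy := hk _ (hins y (Or.inr rfl))
    have hxS : x ∉ S := fun h => by rw [Finset.insert_eq_of_mem h] at hcx; omega
    have hyS : y ∉ S := fun h => by rw [Finset.insert_eq_of_mem h] at hcy; omega
    have hcx' : (insert x S).card = k := by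
      rw [Finset.card_insert_of_notMem hxS] at *; omega
    have hcy' : (insert y S).card = k := by
      rw [Finset.card_insert_of_notMem hyS] at *; omega
    refine mcombine hxy hS hcx' hcy' hxS hyS ?_ ?_
    · exact ih _ hlt _ _ _ k rfl fun Z hZ => hk Z (msep_aux hS h2 hZ)
    · refine ih _ hlt _ _ _ k rfl fun Z hZ => hk Z ?_
      rw [Sym2.eq_swap] at hS hxnot hZ
      exact (msep_aux hS.symm hxnot hZ.symm).symm

/-- Elements separated by a biset `(X, X')`. -/
def CE {V : Type*} (G : SimpleGraph V) (X X' : Set V) : V ⊕ V × V → Prop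
  | Sum.inl z => z ∈ X' ∧ z ∉ X
  | Sum.inr (a, b) => G.Adj a b ∧ a ∈ X ∧ b ∉ X'

open Classical in
noncomputable def bcost {V : Type*} [Fintype V] (G : SimpleGraph V) (X X' : Set V) : ℕ :=
  ∑ α : V ⊕ V × V, if CE G X X' α then 1 else 0

open Classical in
lemma bcost_eq_card {V : Type*} [Fintype V] (G : SimpleGraph V) (X X' : Set V) :
    bcost G X X' = (Finset.univ.filter (CE G X X')).card := by
  simp [bcost]

lemma bcost_compl {V : Type*} [Fintype V] (G : SimpleGraph V) (X X' : Set V) :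
    bcost G X'ᶜ Xᶜ = bcost G X X' := by
  classical
  unfold bcost
  refine Fintype.sum_equiv (Equiv.sumCongr (Equiv.refl V) (Equiv.prodComm V V)) _ _ ?_
  rintro (z | ⟨a, b⟩)
  · simp [CE, and_comm]
  · simp only [CE, Equiv.sumCongr_apply, Sum.map_inr, Equiv.prodComm_apply, Prod.swap,
      Set.mem_compl_iff, not_not, G.adj_comm a b]
    congr 1
    simp [and_comm]

lemma bcost_submod {V : Type*} [Fintype V] (G : SimpleGraph V) (X X' Y Y' : Set V)
    (hX : X ⊆ X') (hY : Y ⊆ Y') :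
    bcost G (X ∩ Y) (X' ∩ Y') + bcost G (X ∪ Y) (X' ∪ Y') ≤ bcost G X X' + bcost G Y Y' := by
  classical
  unfold bcost
  rw [← Finset.sum_add_distrib, ← Finset.sum_add_distrib]
  refine Finset.sum_le_sum fun α _ => ?_
  rcases α with z | ⟨a, b⟩
  · have := @hX z
    have := @hY z
    simp only [CE, Set.mem_inter_iff, Set.mem_union]
    by_cases h1 : z ∈ X <;> by_cases h2 : z ∈ X' <;> by_cases h3 : z ∈ Y <;>
      by_cases h4 : z ∈ Y' <;> simp_all
  · simp only [CE, Set.mem_inter_iff, Set.mem_union]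
    by_cases h0 : G.Adj a b <;> by_cases h1 : a ∈ X <;> by_cases h2 : b ∈ X' <;>
      by_cases h3 : a ∈ Y <;> by_cases h4 : b ∈ Y' <;> simp_all

lemma easy_dir {V : Type*} [Fintype V] {G : SimpleGraph V} {T : Set V} {u v : V} {k : ℕ}
    (h : HasElemPaths G T u v k) {X X' : Set V} (hX : X ⊆ X') (hT : ∀ z ∈ X', z ∉ X → z ∉ T)
    (hu : u ∈ X) (hv : v ∉ X') : k ≤ bcost G X X' := by
  classical
  obtain ⟨P, -, hd⟩ := h
  have : ∀ i, ∃ α : V ⊕ V × V, CE G X X' α ∧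
      ((∃ z, α = Sum.inl z ∧ z ∈ (P i).support) ∨
       (∃ a b, α = Sum.inr (a, b) ∧ s(a, b) ∈ (P i).edges)) := by
    intro i
    obtain ⟨d, hd, h1, h2⟩ := (P i).exists_boundary_dart X hu (fun h => hv (hX h))
    by_cases h3 : d.snd ∈ X'
    · exact ⟨Sum.inl d.snd, ⟨h3, h2⟩, Or.inl ⟨_, rfl,
        (P i).dart_snd_mem_support_of_mem_darts hd⟩⟩
    · refine ⟨Sum.inr (d.fst, d.snd), ⟨d.adj, h1, h3⟩, Or.inr ⟨_, _, rfl, ?_⟩⟩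
      exact List.mem_map.2 ⟨d, hd, rfl⟩
  choose α hα hα' using this
  rw [bcost_eq_card, ← Finset.card_fin k]
  refine Finset.card_le_card_of_injOn α (fun i _ => by simpa using hα i) ?_
  intro i _ j _ hij
  by_contra hne
  obtain ⟨he, hs⟩ := hd i j hne
  have hc := hα i
  have hj := hα' j
  rw [← hij] at hj
  rcases hα' i with ⟨z, hz, hzi⟩ | ⟨a, b, hz, hzi⟩
  · rw [hz] at hj hc
    have hzj : z ∈ (P j).support := by simpa using hj
    have hc : z ∈ X' ∧ z ∉ X := hc
    rcases hs z hzi hzj with h | h | h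
    · exact hT z hc.1 hc.2 h
    · exact hc.2 (h ▸ hu)
    · exact hv (h ▸ hc.1)
  · rw [hz] at hj
    have hzj : s(a, b) ∈ (P j).edges := by
      rcases hj with ⟨z, h, _⟩ | ⟨a', b', h, h'⟩
      · cases h
      · cases h; exact h'
    exact he _ hzi hzj

lemma le_elemConn_iff {V : Type*} [Fintype V] {G : SimpleGraph V} {T : Set V} {u v : V} {k : ℕ}
    (huv : u ≠ v) : k ≤ elemConn G T u v ↔ HasElemPaths G T u v k := by
  have hb : BddAbove {k | HasElemPaths G T u v k} :=
    ⟨bcost G {u} {u}, fun k hk => easy_dir hk subset_rfl (by simp) rfl (by simpa using huv.symm)⟩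
  constructor
  · intro h
    have h0 : HasElemPaths G T u v 0 := ⟨fun i => i.elim0, fun i => i.elim0, fun i => i.elim0⟩
    obtain ⟨P, hP, hd⟩ := Nat.sSup_mem ⟨0, h0⟩ hb
    exact ⟨fun i => P (Fin.castLE h i), fun i => hP _, fun i j hij =>
      hd _ _ (fun h' => hij (Fin.castLE_injective h h'))⟩
  · intro h
    exact le_csSup hb h

def tch {V : Type*} (G : SimpleGraph V) (T : Set V) : V ⊕ Sym2 V → V → Prop
  | Sum.inl x, z => x ∉ T ∧ (z = x ∨ (z ∈ T ∧ G.Adj x z))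
  | Sum.inr e, z => z ∈ e ∧ e ∈ G.edgeSet ∧ ∀ y ∈ e, y ∈ T

/-- The graph on elements. -/
def elemGraph {V : Type*} (G : SimpleGraph V) (T : Set V) : SimpleGraph (V ⊕ Sym2 V) :=
  SimpleGraph.fromRel (fun α β => (∃ z, tch G T α z ∧ tch G T β z) ∨
    ∃ x y, α = Sum.inl x ∧ β = Sum.inl y ∧ G.Adj x y ∧ x ∉ T ∧ y ∉ T)

/-- The subgraph of `G` spanned by the elements in `P`. -/
def spanG {V : Type*} (G : SimpleGraph V) (T : Set V) (P : Set (V ⊕ Sym2 V)) : SimpleGraph V where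
  Adj a b := G.Adj a b ∧ (a ∉ T → Sum.inl a ∈ P) ∧ (b ∉ T → Sum.inl b ∈ P) ∧
    (a ∈ T → b ∈ T → Sum.inr s(a, b) ∈ P)
  symm := ⟨fun a b h => ⟨h.1.symm, h.2.2.1, h.2.1, fun hb ha => by
    rw [Sym2.eq_swap]; exact h.2.2.2 ha hb⟩⟩
  loopless := ⟨fun a h => G.loopless.irrefl a h.1⟩

lemma elemGraph_adj {V : Type*} {G : SimpleGraph V} {T : Set V} {α β : V ⊕ Sym2 V} :
    (elemGraph G T).Adj α β ↔ α ≠ β ∧ ((∃ z, tch G T α z ∧ tch G T β z) ∨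
    ∃ x y, α = Sum.inl x ∧ β = Sum.inl y ∧ G.Adj x y ∧ x ∉ T ∧ y ∉ T) := by
  unfold elemGraph
  rw [fromRel_adj]
  refine and_congr_right fun _ => ⟨?_, Or.inl⟩
  rintro (h | ⟨z, h1, h2⟩ | ⟨x, y, h1, h2, h3, h4, h5⟩)
  · exact h
  · exact Or.inl ⟨z, h2, h1⟩
  · exact Or.inr ⟨y, x, h2, h1, h3.symm, h5, h4⟩

lemma tch_reach {V : Type*} {G : SimpleGraph V} {T : Set V} {P : Set (V ⊕ Sym2 V)}
    {α : V ⊕ Sym2 V} (hα : α ∈ P) {z z' : V} (hz : tch G T α z) (hz' : tch G T α z') :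
    (spanG G T P).Reachable z z' := by
  rcases α with x | e
  · have key : ∀ y, tch G T (Sum.inl x) y → (spanG G T P).Reachable x y := by
      rintro y ⟨hx, rfl | ⟨hy, hxy⟩⟩
      · rfl
      · exact Adj.reachable (G := spanG G T P)
          ⟨hxy, fun _ => hα, fun h => absurd hy h, fun h => absurd h hx⟩
    exact (key z hz).symm.trans (key z' hz')
  · obtain ⟨h1, he, h2⟩ := hz
    obtain ⟨h1', -, -⟩ := hz'
    by_cases hne : z = z'
    · subst hne; rfl
    · have : e = s(z, z') := (Sym2.mem_and_mem_iff hne).1 ⟨h1, h1'⟩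
      subst this
      exact Adj.reachable (G := spanG G T P) ⟨he, fun h => absurd (h2 z h1) h,
        fun h => absurd (h2 z' h1') h, fun _ _ => hα⟩

lemma walk_reach {V : Type*} {G : SimpleGraph V} {T : Set V} {P : Set (V ⊕ Sym2 V)}
    {α β : V ⊕ Sym2 V} (w : (elemGraph G T).Walk α β) : (∀ γ ∈ w.support, γ ∈ P) →
    ∀ {z z' : V}, tch G T α z → tch G T β z' → (spanG G T P).Reachable z z' := by
  induction w with
  | nil => intro h z z' hz hz'; exact tch_reach (h _ (by simp)) hz hz'
  | @cons a b c hab w ih =>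
    intro h z z' hz hz'
    have ha : a ∈ P := h _ (by simp)
    have hb : b ∈ P := h _ (by simp)
    have ih' := @ih (fun γ hγ => h γ (by simp [hγ]))
    rw [elemGraph_adj] at hab
    rcases hab.2 with ⟨y, h1, h2⟩ | ⟨x, y, rfl, rfl, hxy, hx, hy⟩
    · exact (tch_reach ha hz h1).trans (ih' h2 hz')
    · have h1 : (spanG G T P).Reachable z x := tch_reach ha hz ⟨hx, Or.inl rfl⟩
      have h2 : (spanG G T P).Reachable x y := Adj.reachable (G := spanG G T P)
        ⟨hxy, fun _ => ha, fun _ => hb, fun h => absurd h hx⟩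
      exact (h1.trans h2).trans (ih' ⟨hy, Or.inl rfl⟩ hz')

lemma hasElemPaths_of_linked {V : Type*} [Fintype V] {G : SimpleGraph V} {T : Set V} {u v : V}
    {k : ℕ} (hu : u ∈ T)
    (h : MLinked (elemGraph G T) {α | tch G T α u} {α | tch G T α v} k) :
    HasElemPaths G T u v k := by
  classical
  obtain ⟨f, g, w, hf, hg, -, hd⟩ := h
  have hle : ∀ P, spanG G T P ≤ G := fun P a b h => h.1
  have : ∀ i, ∃ W : (spanG G T {γ | γ ∈ (w i).support}).Walk u v, W.IsPath := by
    intro i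
    obtain ⟨W⟩ := walk_reach (P := {γ | γ ∈ (w i).support}) (w i) (fun γ h => h) (hf i) (hg i)
    exact ⟨W.bypass, W.bypass_isPath⟩
  choose W hW using this
  have hsup : ∀ i z, z ∈ (W i).support → z ∉ T → Sum.inl z ∈ (w i).support := by
    intro i z hz hzT
    have hne : z ≠ u := fun h => hzT (h ▸ hu)
    have : ∃ d ∈ (W i).darts, d.snd = z := by
      have h3 := (W i).cons_map_snd_darts
      rw [← h3] at hz
      simp [hne] at hz
      obtain ⟨d, hd⟩ := hz
      exact ⟨d, hd.1, hd.2⟩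
    obtain ⟨d, -, rfl⟩ := this
    exact d.adj.2.2.1 hzT
  refine ⟨fun i => (W i).mapLe (hle _), fun i => (hW i).mapLe _, ?_⟩
  intro i j hij
  constructor
  · intro e hi hj
    rw [Walk.edges_mapLe_eq_edges] at hi hj
    induction e with
    | _ a b =>
    have h1 := (W i).adj_of_mem_edges hi
    have h2 := (W j).adj_of_mem_edges hj
    by_cases ha : a ∈ T
    · by_cases hb : b ∈ T
      · exact hij (hd i j _ (h1.2.2.2 ha hb) (h2.2.2.2 ha hb))
      · exact hij (hd i j _ (h1.2.2.1 hb) (h2.2.2.1 hb))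
    · exact hij (hd i j _ (h1.2.1 ha) (h2.2.1 ha))
  · intro x hi hj
    left
    by_contra hx
    exact hij (hd i j _ (hsup i x (by simpa using hi) hx) (hsup j x (by simpa using hj) hx))

lemma MAv.step' {V : Type*} {G : SimpleGraph V} {A S : Set V} {z y : V} (h : MAv G A S z)
    (hzy : z ≠ y → G.Adj z y) (hy : y ∉ S) : MAv G A S y := by
  by_cases hne : z = y
  · exact hne ▸ h
  · exact h.step (hzy hne) hy

lemma reach_av {V : Type*} {G : SimpleGraph V} {T : Set V} {S : Set (V ⊕ Sym2 V)} {u : V}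
    (hu : u ∈ T) {z : V} (h : Relation.ReflTransGen (spanG G T Sᶜ).Adj u z) :
    z = u ∨ ∃ α, tch G T α z ∧ MAv (elemGraph G T) {α | tch G T α u} S α := by
  induction h with
  | refl => exact Or.inl rfl
  | @tail z b _ hzb ih =>
    right
    obtain ⟨hadj, h1, h2, h3⟩ := hzb
    by_cases hz : z ∈ T
    · -- find an element touching both
      obtain ⟨β, hβz, hβb, hβS⟩ : ∃ β, tch G T β z ∧ tch G T β b ∧ β ∉ S := by
        by_cases hb : b ∈ T
        · refine ⟨Sum.inr s(z, b), ⟨by simp, hadj, ?_⟩, ⟨by simp, hadj, ?_⟩, h3 hz hb⟩ <;>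
            simp [hz, hb]
        · exact ⟨Sum.inl b, ⟨hb, Or.inr ⟨hz, hadj.symm⟩⟩, ⟨hb, Or.inl rfl⟩, h2 hb⟩
      refine ⟨β, hβb, ?_⟩
      rcases ih with rfl | ⟨α, hα, hav⟩
      · exact ⟨β, hβz, Walk.nil, by simpa using hβS⟩
      · exact hav.step' (fun hne => elemGraph_adj.2 ⟨hne, Or.inl ⟨z, hα, hβz⟩⟩) hβS
    · rcases ih with rfl | ⟨α, hα, hav⟩
      · exact absurd hu hz
      have hαz : α = Sum.inl z := by
        rcases α with x | e
        · rcases hα with ⟨_, rfl | h⟩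
          · rfl
          · exact absurd h.1 hz
        · exact absurd (hα.2.2 z hα.1) hz
      subst hαz
      by_cases hb : b ∈ T
      · exact ⟨Sum.inl z, ⟨hz, Or.inr ⟨hb, hadj⟩⟩, hav⟩
      · exact ⟨Sum.inl b, ⟨hb, Or.inl rfl⟩, hav.step' (fun hne => elemGraph_adj.2 ⟨hne,
          Or.inr ⟨z, b, rfl, rfl, hadj, hz, hb⟩⟩) (h2 hb)⟩

lemma hard_dir {V : Type*} [Fintype V] {G : SimpleGraph V} {T : Set V} {u v : V} {k : ℕ}
    (hu : u ∈ T) (hv : v ∈ T) (huv : u ≠ v) (h : ¬ HasElemPaths G T u v k) :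
    ∃ X X' : Set V, X ⊆ X' ∧ (∀ z ∈ X', z ∉ X → z ∉ T) ∧ u ∈ X ∧ v ∉ X' ∧ bcost G X X' < k ∧
      ∀ a b, G.Adj a b → a ∈ X → b ∉ X' → a ∈ T ∧ b ∈ T := by
  classical
  have : ∃ S : Finset (V ⊕ Sym2 V),
      MSep (elemGraph G T) {α | tch G T α u} {α | tch G T α v} S ∧ S.card < k := by
    by_contra hcon
    push Not at hcon
    exact h (hasElemPaths_of_linked hu (menger_aux_s1 _ _ _ _ k rfl hcon))
  obtain ⟨S, hS, hSk⟩ := this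
  set K := spanG G T (S : Set (V ⊕ Sym2 V))ᶜ with hK
  set X : Set V := {z | Relation.ReflTransGen K.Adj u z} with hXdef
  set X' : Set V := X ∪ {z | z ∉ T ∧ Sum.inl z ∈ S} with hX'def
  have hXS : ∀ z ∈ X, z ∉ T → Sum.inl z ∉ S := by
    intro z hz hzT
    rcases Relation.ReflTransGen.cases_tail hz with h | ⟨c, _, hc⟩
    · exact absurd (h ▸ hu) hzT
    · exact hc.2.2.1 hzT
  have hcross : ∀ a b, G.Adj a b → a ∈ X → b ∉ X' →
      a ∈ T ∧ b ∈ T ∧ Sum.inr s(a, b) ∈ S := by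
    intro a b hab ha hb
    by_contra hcon
    apply hb
    left
    refine Relation.ReflTransGen.tail ha ⟨hab, fun h => hXS a ha h, fun h h' => hb (Or.inr ⟨h, h'⟩),
      fun h1 h2 h3 => hcon ⟨h1, h2, h3⟩⟩
  have hsub : X ⊆ X' := Set.subset_union_left
  refine ⟨X, X', hsub, ?_, Relation.ReflTransGen.refl, ?_, ?_, fun a b h1 h2 h3 =>
    ⟨(hcross a b h1 h2 h3).1, (hcross a b h1 h2 h3).2.1⟩⟩
  · rintro z (h | h) hz
    · exact absurd h hz
    · exact h.1
  · rintro (h | h)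
    · rcases reach_av hu h with h | ⟨α, hα, a, ha, w, hw⟩
      · exact huv h.symm
      · obtain ⟨z, hz, hz'⟩ := hS a ha α hα w
        exact hw z hz' hz
    · exact h.1 hv
  · refine lt_of_le_of_lt ?_ hSk
    rw [bcost_eq_card]
    refine Finset.card_le_card_of_injOn (Sum.map id (fun p : V × V => s(p.1, p.2))) ?_ ?_
    · rintro (z | ⟨a, b⟩) hα
      · have hα : z ∈ X' ∧ z ∉ X := by simpa [CE] using hα
        rcases hα.1 with h | h
        · exact absurd h hα.2
        · exact h.2
      · have hα : G.Adj a b ∧ a ∈ X ∧ b ∉ X' := by simpa [CE] using hα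
        exact (hcross a b hα.1 hα.2.1 hα.2.2).2.2
    · rintro (z | ⟨a, b⟩) hα (z' | ⟨a', b'⟩) hβ hαβ
      · simpa using hαβ
      · simp at hαβ
      · simp at hαβ
      · have hα : G.Adj a b ∧ a ∈ X ∧ b ∉ X' := by simpa [CE] using hα
        have hβ : G.Adj a' b' ∧ a' ∈ X ∧ b' ∉ X' := by simpa [CE] using hβ
        simp at hαβ
        rcases hαβ with ⟨rfl, rfl⟩ | ⟨rfl, rfl⟩
        · rfl
        · exact absurd (hsub hα.2.1) hβ.2.2

lemma contract_cut {V : Type*} [Fintype V] [DecidableEq V] {G : SimpleGraph V} {T : Set V} {k : ℕ}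
    {p q : V} (hp : p ∉ T) (hq : q ∉ T) (hpq : G.Adj p q)
    (hk : ∀ u ∈ T, ∀ v ∈ T, u ≠ v → HasElemPaths G T u v k)
    {u v : V} (hu : u ∈ T) (hv : v ∈ T) (huv : u ≠ v)
    (h : ¬ HasElemPaths (contractEdge G p q) T u v k) :
    ∃ X X' : Set V, X ⊆ X' ∧ (∀ z ∈ X', z ∉ X → z ∉ T) ∧ u ∈ X ∧ v ∉ X' ∧ bcost G X X' ≤ k ∧
      p ∈ X' ∧ p ∉ X ∧ q ∈ X' ∧ q ∉ X := by
  obtain ⟨X, X', hsub, hT, huX, hvX, hc, hcr⟩ := hard_dir hu hv huv h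
  let φ : V → V := fun z => if z = q then p else z
  have hφT : ∀ z ∈ T, φ z = z := fun z hz => if_neg (fun h : z = q => hq (h ▸ hz))
  have hφ' : ∀ z, φ z ∈ T → z ∈ T := by
    intro z hz
    by_cases h : z = q
    · exact absurd (by simpa [φ, h] using hz) hp
    · simpa [φ, h] using hz
  have hcross : ∀ a b, G.Adj a b → φ a ∈ X → φ b ∉ X' →
      a ∈ T ∧ b ∈ T ∧ (contractEdge G p q).Adj a b := by
    intro a b hab ha hb
    have hadj : (contractEdge G p q).Adj (φ a) (φ b) := by
      unfold contractEdge
      rw [fromRel_adj]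
      exact ⟨fun h => hb (hsub (h ▸ ha)), Or.inl ⟨a, b, hab, rfl, rfl⟩⟩
    obtain ⟨h1, h2⟩ := hcr _ _ hadj ha hb
    have h1 := hφ' _ h1
    have h2 := hφ' _ h2
    rw [hφT a h1, hφT b h2] at hadj
    exact ⟨h1, h2, hadj⟩
  have hφsub : φ ⁻¹' X ⊆ φ ⁻¹' X' := fun z hz => hsub hz
  have hTb : ∀ z ∈ φ ⁻¹' X', z ∉ φ ⁻¹' X → z ∉ T := by
    intro z h1 h2 hz
    refine hT (φ z) h1 h2 ?_
    rwa [hφT z hz]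
  have huX' : u ∈ φ ⁻¹' X := by simpa [hφT u hu] using huX
  have hvX' : v ∉ φ ⁻¹' X' := by simpa [hφT v hv] using hvX
  have hge := easy_dir (hk u hu v hv huv) hφsub hTb huX' hvX'
  classical
  have himp : ∀ α, CE G (φ ⁻¹' X) (φ ⁻¹' X') α →
      CE (contractEdge G p q) X X' α ∨ (α = Sum.inl q ∧ p ∈ X' ∧ p ∉ X) := by
    rintro (z | ⟨a, b⟩) hα
    · by_cases hz : z = q
      · subst hz
        have hα : φ z ∈ X' ∧ φ z ∉ X := hα
        exact Or.inr ⟨rfl, by simpa [φ] using hα⟩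
      · have hα : φ z ∈ X' ∧ φ z ∉ X := hα
        exact Or.inl (by simpa [φ, hz, CE] using hα)
    · have hα : G.Adj a b ∧ φ a ∈ X ∧ φ b ∉ X' := hα
      obtain ⟨h1, h2, h3⟩ := hcross a b hα.1 hα.2.1 hα.2.2
      rw [hφT a h1, hφT b h2] at hα
      exact Or.inl ⟨h3, hα.2.1, hα.2.2⟩
  rw [bcost_eq_card] at hc hge
  have hpb : p ∈ X' ∧ p ∉ X := by
    by_contra hpb
    have : (Finset.univ.filter (CE G (φ ⁻¹' X) (φ ⁻¹' X'))).card ≤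
        (Finset.univ.filter (CE (contractEdge G p q) X X')).card := by
      apply Finset.card_le_card
      intro α hα
      simp only [Finset.mem_filter, Finset.mem_univ, true_and] at hα ⊢
      rcases himp α hα with h | h
      · exact h
      · exact absurd h.2 hpb
    omega
  have hle : (Finset.univ.filter (CE G (φ ⁻¹' X) (φ ⁻¹' X'))).card ≤
        (insert (Sum.inl q) (Finset.univ.filter (CE (contractEdge G p q) X X'))).card := by
    apply Finset.card_le_card
    intro α hα
    simp only [Finset.mem_filter, Finset.mem_univ, true_and, Finset.mem_insert] at hα ⊢
    rcases himp α hα with h | h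
    · exact Or.inr h
    · exact Or.inl h.1
  have hle2 := Finset.card_insert_le (Sum.inl q)
    (Finset.univ.filter (CE (contractEdge G p q) X X'))
  have hφp : φ p = p := if_neg hpq.ne
  have hφq : φ q = p := if_pos rfl
  refine ⟨φ ⁻¹' X, φ ⁻¹' X', hφsub, hTb, huX', hvX', ?_, ?_, ?_, ?_, ?_⟩
  · rw [bcost_eq_card]; omega
  · simpa [hφp] using hpb.1
  · simpa [hφp] using hpb.2
  · simpa [hφq] using hpb.1
  · simpa [hφq] using hpb.2

lemma bcost_mono {V : Type*} [Fintype V] {G G' : SimpleGraph V} {X X' : Set V}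
    (h : ∀ a b, G.Adj a b → a ∈ X → b ∉ X' → G'.Adj a b) : bcost G X X' ≤ bcost G' X X' := by
  classical
  rw [bcost_eq_card, bcost_eq_card]
  apply Finset.card_le_card
  rintro (z | ⟨a, b⟩) hα
  · simpa [CE] using hα
  · simp only [Finset.mem_filter, Finset.mem_univ, true_and, CE] at hα ⊢
    exact ⟨h a b hα.1 hα.2.1 hα.2.2, hα.2⟩

/-- The uncrossing contradiction. -/
lemma uncross_s1 {V : Type*} [Fintype V] {G : SimpleGraph V} {T : Set V} {k : ℕ}
    {p q : V} (hk : ∀ u ∈ T, ∀ v ∈ T, u ≠ v → HasElemPaths G T u v k)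
    {A A' B B' : Set V} (hA : A ⊆ A') (hB : B ⊆ B')
    (hAT : ∀ z ∈ A', z ∉ A → z ∉ T) (hBT : ∀ z ∈ B', z ∉ B → z ∉ T)
    (hAc : bcost (G.deleteEdges {s(p, q)}) A A' < k)
    (hBc : bcost G B B' ≤ k) (hpA : p ∈ A) (hqA : q ∉ A')
    (hpB : p ∈ B' ∧ p ∉ B) (hqB : q ∈ B' ∧ q ∉ B)
    {u v : V} (hu : u ∈ T) (hv : v ∈ T) (huA : u ∈ A) (huB : u ∈ B) (hvA : v ∉ A)
    (hvB : v ∉ B) : False := by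
  have hvA' : v ∉ A' := fun h => hAT v h hvA hv
  have hvB' : v ∉ B' := fun h => hBT v h hvB hv
  have huv : u ≠ v := fun h => hvA (h ▸ huA)
  have h1 := easy_dir (hk u hu v hv huv) (X := A ∩ B) (X' := A' ∩ B')
    (Set.inter_subset_inter hA hB) (by
      intro z hz hz' hzT
      exact hz' ⟨by_contra fun h => hAT z hz.1 h hzT, by_contra fun h => hBT z hz.2 h hzT⟩)
    ⟨huA, huB⟩ (fun h => hvA' h.1)
  have h2 := easy_dir (hk u hu v hv huv) (X := A ∪ B) (X' := A' ∪ B')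
    (Set.union_subset_union hA hB) (by
      intro z hz hz' hzT
      rcases hz with h | h
      · exact hAT z h (fun h => hz' (Or.inl h)) hzT
      · exact hBT z h (fun h => hz' (Or.inr h)) hzT)
    (Or.inl huA) (by rintro (h | h); exacts [hvA' h, hvB' h])
  have h3 := bcost_submod (G.deleteEdges {s(p, q)}) A A' B B' hA hB
  have h4 : bcost G (A ∩ B) (A' ∩ B') ≤ bcost (G.deleteEdges {s(p, q)}) (A ∩ B) (A' ∩ B') := by
    apply bcost_mono
    intro a b hab ha hb
    rw [deleteEdges_adj]
    refine ⟨hab, ?_⟩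
    simp only [Set.mem_singleton_iff, Sym2.eq_iff]
    rintro (⟨rfl, rfl⟩ | ⟨rfl, rfl⟩)
    · exact hpB.2 ha.2
    · exact hqB.2 ha.2
  have h5 : bcost G (A ∪ B) (A' ∪ B') ≤ bcost (G.deleteEdges {s(p, q)}) (A ∪ B) (A' ∪ B') := by
    apply bcost_mono
    intro a b hab ha hb
    rw [deleteEdges_adj]
    refine ⟨hab, ?_⟩
    simp only [Set.mem_singleton_iff, Sym2.eq_iff]
    rintro (⟨rfl, rfl⟩ | ⟨rfl, rfl⟩)
    · exact hb (Or.inr hqB.1)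
    · exact hb (Or.inr hpB.1)
  have h6 : bcost (G.deleteEdges {s(p, q)}) B B' ≤ bcost G B B' :=
    bcost_mono fun a b hab _ _ => deleteEdges_le _ hab
  omega

lemma uncross' {V : Type*} [Fintype V] {G : SimpleGraph V} {T : Set V} {k : ℕ}
    {p q : V} (hk : ∀ u ∈ T, ∀ v ∈ T, u ≠ v → HasElemPaths G T u v k)
    {A A' B B' : Set V} (hA : A ⊆ A') (hB : B ⊆ B')
    (hAT : ∀ z ∈ A', z ∉ A → z ∉ T) (hBT : ∀ z ∈ B', z ∉ B → z ∉ T)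
    (hAc : bcost (G.deleteEdges {s(p, q)}) A A' < k)
    (hBc : bcost G B B' ≤ k) (hpA : p ∈ A) (hqA : q ∉ A')
    (hpB : p ∈ B' ∧ p ∉ B) (hqB : q ∈ B' ∧ q ∉ B)
    {s t x y : V} (hs : s ∈ T) (ht : t ∈ T) (hx : x ∈ T) (hy : y ∈ T)
    (hsA : s ∈ A) (htA : t ∉ A') (hxB : x ∈ B) (hyB : y ∉ B') : False := by
  by_cases hcase : (∃ u ∈ T, u ∈ A ∧ u ∈ B) ∧ (∃ v ∈ T, v ∉ A ∧ v ∉ B)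
  · obtain ⟨⟨u, hu, huA, huB⟩, ⟨v, hv, hvA, hvB⟩⟩ := hcase
    exact uncross_s1 hk hA hB hAT hBT hAc hBc hpA hqA hpB hqB hu hv huA huB hvA hvB
  · have hcase' : ∃ u v, u ∈ T ∧ v ∈ T ∧ u ∈ A ∧ u ∉ B ∧ v ∉ A ∧ v ∈ B := by
      have := @hA t
      have := @hB y
      by_cases h : ∃ u ∈ T, u ∈ A ∧ u ∈ B
      · have h' : ¬ ∃ v ∈ T, v ∉ A ∧ v ∉ B := fun h' => hcase ⟨h, h'⟩
        push Not at h'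
        exact ⟨y, t, hy, ht, by by_contra h3; have := h' y hy h3; tauto, by tauto, by tauto,
          h' t ht (by tauto)⟩
      · push Not at h
        exact ⟨s, x, hs, hx, hsA, h s hs hsA, fun h3 => h x hx h3 hxB, hxB⟩
    obtain ⟨u, v, hu, hv, huA, huB, hvA, hvB⟩ := hcase'
    refine uncross_s1 hk (B := B'ᶜ) (B' := Bᶜ) hA (Set.compl_subset_compl.2 hB) hAT ?_ hAc
      (by rw [bcost_compl]; exact hBc) hpA hqA ⟨hpB.2, fun h => h hpB.1⟩
      ⟨hqB.2, fun h => h hqB.1⟩ hu hv huA (fun h => hBT u h huB hu) hvA (fun h => h (hB hvB))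
    intro z h1 h2
    exact hBT z (by simpa using h2) h1

/-- **Global element-connectivity reduction (Hind–Oellermann).** If every pair of
terminals is `k`-element-connected in `G` and `pq` is an edge between non-terminals,
then deleting `pq` or contracting `pq` keeps every pair of terminals
`k`-element-connected. -/
theorem global_reduction {V : Type*} [Fintype V] [DecidableEq V]
    (G : SimpleGraph V) (T : Set V) (k : ℕ) (p q : V)
    (hp : p ∉ T) (hq : q ∉ T) (hpq : G.Adj p q)
    (hk : ∀ u ∈ T, ∀ v ∈ T, u ≠ v → k ≤ elemConn G T u v) :
    (∀ u ∈ T, ∀ v ∈ T, u ≠ v → k ≤ elemConn (G.deleteEdges {s(p, q)}) T u v) ∨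
    (∀ u ∈ T, ∀ v ∈ T, u ≠ v → k ≤ elemConn (contractEdge G p q) T u v) := by
  by_contra hcon
  push Not at hcon
  obtain ⟨⟨s, hs, t, ht, hst, h1⟩, ⟨x, hx, y, hy, hxy, h2⟩⟩ := hcon
  have hk' : ∀ u ∈ T, ∀ v ∈ T, u ≠ v → HasElemPaths G T u v k := fun u hu v hv huv =>
    (le_elemConn_iff huv).1 (hk u hu v hv huv)
  have h1' : ¬ HasElemPaths (G.deleteEdges {s(p, q)}) T s t k := fun h =>
    absurd ((le_elemConn_iff hst).2 h) (not_le.2 h1)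
  have h2' : ¬ HasElemPaths (contractEdge G p q) T x y k := fun h =>
    absurd ((le_elemConn_iff hxy).2 h) (not_le.2 h2)
  obtain ⟨A, A', hA, hAT, hsA, htA, hAc, -⟩ := hard_dir hs ht hst h1'
  obtain ⟨B, B', hB, hBT, hxB, hyB, hBc, hpB, hpB', hqB, hqB'⟩ :=
    contract_cut hp hq hpq hk' hx hy hxy h2'
  by_cases hc1 : p ∈ A ∧ q ∉ A'
  · exact uncross' hk' hA hB hAT hBT hAc hBc hc1.1 hc1.2 ⟨hpB, hpB'⟩ ⟨hqB, hqB'⟩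
      hs ht hx hy hsA htA hxB hyB
  by_cases hc2 : q ∈ A ∧ p ∉ A'
  · rw [Sym2.eq_swap] at hAc
    exact uncross' hk' hA hB hAT hBT hAc hBc hc2.1 hc2.2 ⟨hqB, hqB'⟩ ⟨hpB, hpB'⟩
      hs ht hx hy hsA htA hxB hyB
  have h3 := easy_dir (hk' s hs t ht hst) hA hAT hsA htA
  have h4 : bcost G A A' ≤ bcost (G.deleteEdges {s(p, q)}) A A' := by
    apply bcost_mono
    intro a b hab ha hb
    rw [deleteEdges_adj]
    refine ⟨hab, ?_⟩
    simp only [Set.mem_singleton_iff, Sym2.eq_iff]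
    rintro (⟨rfl, rfl⟩ | ⟨rfl, rfl⟩)
    · exact hc1 ⟨ha, hb⟩
    · exact hc2 ⟨ha, hb⟩
  omega
end

section
/- Let G=(V,E) be an undirected graph with disjoint terminal groups T₁,…,T_m such that κ'_G(T_i) ≥ k for every i, let T = ⋃_i T_i with |T| ≥ 2, and assume m ≥ 2. Then G contains at least k/(12 · log₂|T| · log₂ m) pairwise element-disjoint Steiner forests (for m = 1, G contains at least k/(6 log₂|T|) pairwise element-disjoint Steiner trees spanning T). -/
open SimpleGraph

/-- Two subgraphs, given as graphs on the same vertex set, are *element-disjoint* with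
respect to the terminal set `T`: they share no edges and no non-terminal vertices. -/
def EDisj {V : Type*} (T : Set V) (H₁ H₂ : SimpleGraph V) : Prop :=
  Disjoint H₁.edgeSet H₂.edgeSet ∧ ∀ x, x ∈ H₁.support → x ∈ H₂.support → x ∈ T

/-- `H` is a Steiner tree of `G` for the terminal set `T`: a tree subgraph of `G`
containing all the terminals. -/
def IsSteinerTree {V : Type*} (G : SimpleGraph V) (T : Set V) (H : SimpleGraph V) : Prop :=
  H ≤ G ∧ H.IsAcyclic ∧
    ∀ x ∈ H.support ∪ T, ∀ y ∈ H.support ∪ T, H.Reachable x y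

/-- `H` is a Steiner forest of `G` for the terminal groups `T i`: a forest subgraph of
`G` in which each group lies entirely within a single tree of the forest. -/
def IsSteinerForest {V : Type*} {m : ℕ} (G : SimpleGraph V) (T : Fin m → Set V)
    (H : SimpleGraph V) : Prop :=
  H ≤ G ∧ H.IsAcyclic ∧ ∀ i, ∀ u ∈ T i, ∀ v ∈ T i, H.Reachable u v

namespace SFP

def Cr {X : Type*} (P S : Set X) : Prop := (∃ x ∈ P, x ∈ S) ∧ ∃ x ∈ P, x ∉ S

/-- bi-set cut -/
structure IsCut {E X : Type*} (H : SimpleGraph E) (N : E → Set X) (S : Set X)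
    (A D : Finset E) : Prop where
  sub : A ⊆ D
  inS : ∀ e ∈ A, ∀ x ∈ N e, x ∈ S
  outS : ∀ e, e ∉ D → ∀ x ∈ N e, x ∉ S
  adj : ∀ e f, H.Adj e f → e ∈ A → f ∈ D

def CutCond {E X : Type*} (Sep : Set X → Prop) (k : ℕ) (H : SimpleGraph E) (N : E → Set X) : Prop :=
  ∀ S A D, Sep S → IsCut H N S A D → A.card + k ≤ D.card

def Linked {E X : Type*} (H : SimpleGraph E) (N : E → Set X) (b : Set E) (P : Set X) : Prop :=
  ∀ (S : Set X) (L : Set E), (∀ f ∈ b, f ∈ L → ∀ x ∈ N f, x ∈ S) →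
    (∀ f ∈ b, f ∉ L → ∀ x ∈ N f, x ∉ S) →
    (∀ f ∈ b, ∀ g ∈ b, H.Adj f g → f ∈ L → g ∈ L) → ¬ Cr P S

theorem IsCut.compl {E X : Type*} [Fintype E] [DecidableEq E] {H : SimpleGraph E} {N : E → Set X}
    {S : Set X} {A D : Finset E} (h : IsCut H N S A D) : IsCut H N Sᶜ Dᶜ Aᶜ where
  sub := by
    have := h.sub
    intro e; simp only [Finset.mem_compl]; exact fun he ha => he (this ha)
  inS := by
    intro e he x hx
    exact h.outS e (by simpa using he) x hx
  outS := by
    intro e he x hx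
    have := h.inS e (by simpa using he) x hx
    simpa using this
  adj := by
    intro e f hef he
    simp only [Finset.mem_compl] at *
    exact fun hf => he (h.adj f e hef.symm hf)

theorem uncross {E X : Type*} [Fintype E] [DecidableEq E] {Sep : Set X → Prop}
    (hun : ∀ S₁ S₂, Sep S₁ → Sep S₂ →
      (Sep (S₁ ∩ S₂) ∧ Sep (S₁ ∪ S₂)) ∨ (Sep (S₁ ∩ S₂ᶜ) ∧ Sep (S₁ ∪ S₂ᶜ)))
    {k : ℕ} {H : SimpleGraph E} {N : E → Set X} (hc : CutCond Sep k H N) {p q : E}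
    {S₁ S₂ : Set X} {A₁ D₁ A₂ D₂ : Finset E} (h₁ : Sep S₁) (h₂ : Sep S₂)
    (c₁ : IsCut (H.deleteEdges {s(p, q)}) N S₁ A₁ D₁) (c₂ : IsCut H N S₂ A₂ D₂)
    (k₁ : D₁.card < A₁.card + k) (k₂ : D₂.card ≤ A₂.card + k)
    (hp₂ : p ∉ A₂) (hq₂ : q ∉ A₂) (hp₂' : p ∈ D₂) (hq₂' : q ∈ D₂) : False := by
  have key : ∀ (S₂ : Set X) (A₂ D₂ : Finset E), IsCut H N S₂ A₂ D₂ → D₂.card ≤ A₂.card + k →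
      p ∉ A₂ → q ∉ A₂ → p ∈ D₂ → q ∈ D₂ → Sep (S₁ ∩ S₂) → Sep (S₁ ∪ S₂) → False := by
    intro S₂ A₂ D₂ c₂ k₂ hp₂ hq₂ hp₂' hq₂' s1 s2
    have adj1 : ∀ e f, H.Adj e f → e ∈ A₁ → f ∈ D₁ ∨ s(e, f) = s(p, q) := by
      intro e f hef he
      by_cases h : s(e, f) = s(p, q)
      · exact Or.inr h
      · refine Or.inl (c₁.adj e f ?_ he)
        rw [SimpleGraph.deleteEdges_adj]
        exact ⟨hef, by simpa using h⟩
    have i1 := hc _ (A₁ ∩ A₂) (D₁ ∩ D₂) s1 ⟨Finset.inter_subset_inter c₁.sub c₂.sub, by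
        intro e he x hx
        rw [Finset.mem_inter] at he
        exact ⟨c₁.inS e he.1 x hx, c₂.inS e he.2 x hx⟩, by
        intro e he x hx hxs
        rw [Finset.mem_inter] at he
        by_cases h : e ∈ D₁
        · exact c₂.outS e (fun h' => he ⟨h, h'⟩) x hx hxs.2
        · exact c₁.outS e h x hx hxs.1, by
        intro e f hef he
        rw [Finset.mem_inter] at he ⊢
        refine ⟨?_, c₂.adj e f hef he.2⟩
        rcases adj1 e f hef he.1 with h | h
        · exact h
        · rw [Sym2.eq_iff] at h
          rcases h with ⟨rfl, rfl⟩ | ⟨rfl, rfl⟩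
          · exact absurd he.2 hp₂
          · exact absurd he.2 hq₂⟩
    have i2 := hc _ (A₁ ∪ A₂) (D₁ ∪ D₂) s2 ⟨Finset.union_subset_union c₁.sub c₂.sub, by
        intro e he x hx
        rw [Finset.mem_union] at he
        exact he.imp (fun h => c₁.inS e h x hx) (fun h => c₂.inS e h x hx), by
        intro e he x hx hxs
        rw [Finset.mem_union, not_or] at he
        rcases hxs with h | h
        · exact c₁.outS e he.1 x hx h
        · exact c₂.outS e he.2 x hx h, by
        intro e f hef he
        rw [Finset.mem_union] at he ⊢
        rcases he with he | he
        · rcases adj1 e f hef he with h | h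
          · exact Or.inl h
          · rw [Sym2.eq_iff] at h
            rcases h with ⟨rfl, rfl⟩ | ⟨rfl, rfl⟩
            · exact Or.inr hq₂'
            · exact Or.inr hp₂'
        · exact Or.inr (c₂.adj e f hef he)⟩
    have e1 := Finset.card_union_add_card_inter A₁ A₂
    have e2 := Finset.card_union_add_card_inter D₁ D₂
    omega
  rcases hun S₁ S₂ h₁ h₂ with ⟨a, b⟩ | ⟨a, b⟩
  · exact key S₂ A₂ D₂ c₂ k₂ hp₂ hq₂ hp₂' hq₂' a b
  · refine key S₂ᶜ D₂ᶜ A₂ᶜ c₂.compl ?_ (by simpa) (by simpa) (by simpa) (by simpa) a b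
    have := Finset.card_add_card_compl A₂
    have := Finset.card_add_card_compl D₂
    omega

def contr {E : Type*} (H : SimpleGraph E) (p q : E) : SimpleGraph E where
  Adj x y := x ≠ y ∧ x ≠ q ∧ y ≠ q ∧ (H.Adj x y ∨ (x = p ∧ H.Adj q y) ∨ (y = p ∧ H.Adj q x))
  symm := ⟨by
    rintro x y ⟨a, b, c, d⟩
    refine ⟨a.symm, c, b, ?_⟩
    rcases d with d | d | d
    · exact Or.inl d.symm
    · exact Or.inr (Or.inr d)
    · exact Or.inr (Or.inl d)⟩
  loopless := ⟨fun x h => h.1 rfl⟩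

open Classical in
theorem contr_fail {E X : Type*} [Fintype E] {Sep : Set X → Prop}
    {k : ℕ} {H : SimpleGraph E} {N : E → Set X} (hc : CutCond Sep k H N) {p q : E}
    (hpq : H.Adj p q) {S : Set X} {A D : Finset E} (hS : Sep S)
    (c : IsCut (contr H p q) (fun e => if e = p then N p ∪ N q else if e = q then ∅ else N e) S A D)
    (hk : D.card < A.card + k) :
    ∃ A' D', IsCut H N S A' D' ∧ D'.card ≤ A'.card + k ∧ p ∉ A' ∧ q ∉ A' ∧ p ∈ D' ∧ q ∈ D' := by
  have hne : p ≠ q := hpq.ne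
  have cs := c.sub
  have ci := c.inS
  have co := c.outS
  have ca := c.adj
  have ca1 : ∀ x y, H.Adj x y → x ≠ q → y ≠ q → x ∈ A → y ∈ D := fun x y h1 h2 h3 h4 =>
    ca x y ⟨h1.ne, h2, h3, Or.inl h1⟩ h4
  have ca2 : ∀ y, H.Adj q y → y ≠ p → p ∈ A → y ∈ D := fun y h1 h2 h4 =>
    ca p y ⟨h2.symm, hne, h1.ne.symm, Or.inr (Or.inl ⟨rfl, h1⟩)⟩ h4
  have ca3 : ∀ y, H.Adj q y → y ≠ p → y ∈ A → p ∈ D := fun y h1 h2 h4 =>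
    ca y p ⟨h2, h1.ne.symm, hne, Or.inr (Or.inr ⟨rfl, h1⟩)⟩ h4
  have cip : p ∈ A → ∀ x, x ∈ N p ∨ x ∈ N q → x ∈ S := fun h x hx => ci p h x (by simpa using hx)
  have cop : p ∉ D → ∀ x, x ∈ N p ∨ x ∈ N q → x ∉ S := fun h x hx => co p h x (by simpa using hx)
  have ci' : ∀ e ∈ A, e ≠ p → e ≠ q → ∀ x ∈ N e, x ∈ S := fun e he h1 h2 x hx =>
    ci e he x (by simpa [h1, h2] using hx)
  have co' : ∀ e, e ∉ D → e ≠ p → e ≠ q → ∀ x ∈ N e, x ∉ S := fun e he h1 h2 x hx =>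
    co e he x (by simpa [h1, h2] using hx)
  have hsym : ∀ x y, H.Adj x y → H.Adj y x := fun x y h => h.symm
  clear ci co ca c
  by_cases hpA : p ∈ A
  · exfalso
    have := hc S (insert q A) (insert q D) hS
      ⟨Finset.insert_subset_insert _ cs, by
        intro e he x hx; by_cases e1 : e = p <;> by_cases e2 : e = q <;> grind, by
        intro e he x hx; by_cases e1 : e = p <;> by_cases e2 : e = q <;> grind, by grind⟩
    by_cases h1 : q ∈ A
    · have h2 := cs h1
      rw [Finset.insert_eq_of_mem h1, Finset.insert_eq_of_mem h2] at this
      omega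
    · rw [Finset.card_insert_of_notMem h1] at this
      have := Finset.card_insert_le q D
      omega
  by_cases hpD : p ∈ D
  · refine ⟨A.erase q, insert q D, ⟨by grind, by
        intro e he x hx; by_cases e1 : e = p <;> by_cases e2 : e = q <;> grind, by
        intro e he x hx; by_cases e1 : e = p <;> by_cases e2 : e = q <;> grind, ?_⟩, ?_,
      by grind, by grind, by grind, by grind⟩
    · grind
    · by_cases h1 : q ∈ A
      · rw [Finset.insert_eq_of_mem (cs h1), Finset.card_erase_of_mem h1]
        omega
      · rw [Finset.erase_eq_of_notMem h1]
        have := Finset.card_insert_le q D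
        omega
  · exfalso
    have := hc S (A.erase q) (D.erase q) hS ⟨Finset.erase_subset_erase _ cs, by
        intro e he x hx; by_cases e1 : e = p <;> by_cases e2 : e = q <;> grind, by
        intro e he x hx; by_cases e1 : e = p <;> by_cases e2 : e = q <;> grind, by grind⟩
    by_cases h1 : q ∈ A
    · rw [Finset.card_erase_of_mem h1, Finset.card_erase_of_mem (cs h1)] at this
      have := Finset.card_pos.mpr ⟨q, h1⟩
      have := Finset.card_pos.mpr ⟨q, cs h1⟩
      omega
    · rw [Finset.erase_eq_of_notMem h1] at this
      have := Finset.card_erase_le (s := D) (a := q)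
      omega

open Classical in
theorem reduce {E X : Type*} [Fintype E] {Sep : Set X → Prop}
    (hun : ∀ S₁ S₂, Sep S₁ → Sep S₂ →
      (Sep (S₁ ∩ S₂) ∧ Sep (S₁ ∪ S₂)) ∨ (Sep (S₁ ∩ S₂ᶜ) ∧ Sep (S₁ ∪ S₂ᶜ)))
    {k : ℕ} (U : Set X) : ∀ (a : ℕ) (H : SimpleGraph E) (N : E → Set X), H.support.ncard = a →
    CutCond Sep k H N → (∀ e, N e ⊆ U) →
    ∃ (N' : E → Set X) (b : E → Set E), (∀ e f, e ≠ f → Disjoint (b e) (b f)) ∧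
      (∀ e, Linked H N (b e) (N' e)) ∧ (∀ e, N' e ⊆ U) ∧
      ∀ S, Sep S → k ≤ (Finset.univ.filter fun e => Cr (N' e) S).card := by
  intro a
  induction a using Nat.strong_induction_on with
  | _ a iha =>
  intro H
  induction H using WellFoundedLT.induction with
  | _ H ihH =>
  intro N ha hc hU
  by_cases hbot : ∀ p q, ¬ H.Adj p q
  · refine ⟨N, fun e => {e}, ?_, ?_, hU, ?_⟩
    · intro e f hef; simpa using hef
    · rintro e S L h1 h2 _ ⟨⟨x, hx, hxS⟩, y, hy, hyS⟩
      by_cases he : e ∈ L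
      · exact hyS (h1 e rfl he y hy)
      · exact h2 e rfl he x hx hxS
    · intro S hS
      have := hc S (Finset.univ.filter fun e => ∀ x ∈ N e, x ∈ S)
        (Finset.univ.filter fun e => (∀ x ∈ N e, x ∈ S) ∨ Cr (N e) S) hS
          ⟨by intro e; simp only [Finset.mem_filter, Finset.mem_univ, true_and]; exact Or.inl,
           by intro e; simp only [Finset.mem_filter, Finset.mem_univ, true_and]; exact id, by
            intro e he x hx hxS
            simp only [Finset.mem_filter, Finset.mem_univ, true_and, not_or, not_forall] at he
            obtain ⟨⟨y, hy, hyS⟩, h2⟩ := he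
            exact h2 ⟨⟨x, hx, hxS⟩, y, hy, hyS⟩, fun e f h => absurd h (hbot e f)⟩
      rw [Finset.filter_or] at this
      have := Finset.card_union_le (Finset.univ.filter fun e => ∀ x ∈ N e, x ∈ S) (Finset.univ.filter fun e => Cr (N e) S)
      omega
  push Not at hbot
  obtain ⟨p, q, hpq⟩ := hbot
  have hne : p ≠ q := hpq.ne
  by_cases hdel : CutCond Sep k (H.deleteEdges {s(p, q)}) N
  · have hle : H.deleteEdges {s(p, q)} ≤ H := SimpleGraph.deleteEdges_le _
    have hlt : H.deleteEdges {s(p, q)} < H := by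
      refine lt_of_le_of_ne hle fun h => ?_
      have := hpq
      rw [← h, SimpleGraph.deleteEdges_adj] at this
      exact this.2 rfl
    have hsup : (H.deleteEdges {s(p, q)}).support.ncard ≤ a := by
      rw [← ha]
      exact Set.ncard_le_ncard (SimpleGraph.support_mono hle) (Set.toFinite _)
    have : ∃ (N' : E → Set X) (b : E → Set E), (∀ e f, e ≠ f → Disjoint (b e) (b f)) ∧
      (∀ e, Linked (H.deleteEdges {s(p, q)}) N (b e) (N' e)) ∧ (∀ e, N' e ⊆ U) ∧
      ∀ S, Sep S → k ≤ (Finset.univ.filter fun e => Cr (N' e) S).card := by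
      rcases hsup.lt_or_eq with h | h
      · exact iha _ h _ N rfl hdel hU
      · exact ihH _ hlt N h hdel hU
    obtain ⟨N', b, h1, h2, h3, h4⟩ := this
    refine ⟨N', b, h1, fun e S L a1 a2 a3 => h2 e S L a1 a2 fun f hf g hg hfg => ?_, h3, h4⟩
    exact a3 f hf g hg (hle hfg)
  · set N1 : E → Set X := fun e => if e = p then N p ∪ N q else if e = q then ∅ else N e with hN1
    have hcon : CutCond Sep k (contr H p q) N1 := by
      by_contra hcon
      unfold CutCond at hcon hdel
      push Not at hcon hdel
      obtain ⟨S₂, A, D, s2, cc, kk⟩ := hcon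
      obtain ⟨S₁, A₁, D₁, s1, c1, k1⟩ := hdel
      obtain ⟨A', D', z1, z2, z3, z4, z5, z6⟩ := contr_fail hc hpq s2 cc kk
      exact uncross hun hc s1 s2 c1 z1 k1 z2 z3 z4 z5 z6
    have hsup : (contr H p q).support ⊂ H.support := by
      refine ⟨?_, ?_⟩
      · rintro x ⟨y, hxy⟩
        rcases hxy with ⟨_, _, _, h | ⟨rfl, _⟩ | ⟨_, h⟩⟩
        · exact ⟨y, h⟩
        · exact ⟨q, hpq⟩
        · exact ⟨q, h.symm⟩
      · intro h
        obtain ⟨y, hy⟩ := h (show q ∈ H.support from ⟨p, hpq.symm⟩)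
        exact hy.2.1 rfl
    obtain ⟨N', b, h1, h2, h3, h4⟩ := iha _ (ha ▸ Set.ncard_lt_ncard hsup (Set.toFinite _)) _ N1 rfl hcon
      (by intro e; simp only [hN1]; split_ifs; exacts [Set.union_subset (hU p) (hU q), Set.empty_subset _, hU e])
    refine ⟨N', fun e => if p ∈ b e then insert q (b e) else b e \ {q}, ?_, ?_, h3, h4⟩
    · intro e f hef
      have := h1 e f hef
      rw [Set.disjoint_left] at this ⊢
      intro x
      have t1 := @this x
      have t2 := @this p
      clear this h1 h2 h3 h4 iha ihH hun hc
      dsimp only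
      split_ifs <;> simp only [Set.mem_insert_iff, Set.mem_sdiff, Set.mem_singleton_iff] <;> grind
    · intro e S L a1 a2 a3
      have hp1 : N1 p = N p ∪ N q := by simp [hN1]
      have hq1 : N1 q = ∅ := by simp [hN1, hne.symm]
      have ho1 : ∀ f, f ≠ p → f ≠ q → N1 f = N f := by intro f h h'; simp [hN1, h, h']
      by_cases hpb : p ∈ b e
      · simp only [hpb, if_true, Set.mem_insert_iff] at a1 a2 a3
        have l1 : p ∈ L ↔ q ∈ L := ⟨a3 p (Or.inr hpb) q (Or.inl rfl) hpq, a3 q (Or.inl rfl) p (Or.inr hpb) hpq.symm⟩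
        refine h2 e S L ?_ ?_ ?_
        · intro f hf hL x hx
          by_cases e1 : f = p
          · subst e1; rw [hp1] at hx
            rcases hx with hx | hx
            · exact a1 f (Or.inr hf) hL x hx
            · exact a1 q (Or.inl rfl) (l1.1 hL) x hx
          by_cases e2 : f = q
          · subst e2; rw [hq1] at hx; exact hx.elim
          rw [ho1 f e1 e2] at hx
          exact a1 f (Or.inr hf) hL x hx
        · intro f hf hL x hx
          by_cases e1 : f = p
          · subst e1; rw [hp1] at hx
            rcases hx with hx | hx
            · exact a2 f (Or.inr hf) hL x hx
            · exact a2 q (Or.inl rfl) (fun h => hL (l1.2 h)) x hx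
          by_cases e2 : f = q
          · subst e2; rw [hq1] at hx; exact hx.elim
          rw [ho1 f e1 e2] at hx
          exact a2 f (Or.inr hf) hL x hx
        · rintro f hf g hg ⟨_, _, _, h | ⟨rfl, h⟩ | ⟨rfl, h⟩⟩ hL
          · exact a3 f (Or.inr hf) g (Or.inr hg) h hL
          · exact a3 q (Or.inl rfl) g (Or.inr hg) h (l1.1 hL)
          · exact l1.2 (a3 f (Or.inr hf) q (Or.inl rfl) h.symm hL)
      · simp only [hpb, if_false, Set.mem_sdiff, Set.mem_singleton_iff] at a1 a2 a3
        refine h2 e S L ?_ ?_ ?_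
        · intro f hf hL x hx
          have e1 : f ≠ p := fun h => hpb (h ▸ hf)
          by_cases e2 : f = q
          · subst e2; rw [hq1] at hx; exact hx.elim
          rw [ho1 f e1 e2] at hx
          exact a1 f ⟨hf, e2⟩ hL x hx
        · intro f hf hL x hx
          have e1 : f ≠ p := fun h => hpb (h ▸ hf)
          by_cases e2 : f = q
          · subst e2; rw [hq1] at hx; exact hx.elim
          rw [ho1 f e1 e2] at hx
          exact a2 f ⟨hf, e2⟩ hL x hx
        · rintro f hf g hg ⟨_, hfq, hgq, h | ⟨rfl, h⟩ | ⟨rfl, h⟩⟩ hL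
          · exact a3 f ⟨hf, hfq⟩ g ⟨hg, hgq⟩ h hL
          · exact absurd hf hpb
          · exact absurd hg hpb

end SFP

namespace SFP

def rel {E X : Type*} (N : E → Set X) (F : Finset E) : Setoid X where
  r x y := ∀ S : Set X, (∀ e ∈ F, ¬ Cr (N e) S) → (x ∈ S ↔ y ∈ S)
  iseqv := ⟨fun _ _ _ => Iff.rfl, fun h S hS => (h S hS).symm,
    fun h1 h2 S hS => (h1 S hS).trans (h2 S hS)⟩

theorem rel_of_mem {E X : Type*} {N : E → Set X} {F : Finset E} {e : E} (he : e ∈ F) {x y : X}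
    (hx : x ∈ N e) (hy : y ∈ N e) : (rel N F).r x y := by
  intro S hS
  have := hS e he
  unfold Cr at this
  constructor
  · intro h; by_contra h'; exact this ⟨⟨x, hx, h⟩, y, hy, h'⟩
  · intro h; by_contra h'; exact this ⟨⟨y, hy, h⟩, x, hx, h'⟩

theorem rel_mono {E X : Type*} {N : E → Set X} {F F' : Finset E} (h : F ⊆ F') {x y : X}
    (hxy : (rel N F).r x y) : (rel N F').r x y :=
  fun S hS => hxy S fun e he => hS e (h he)

noncomputable def cc {E X : Type*} (N : E → Set X) (F : Finset E) : ℕ := Nat.card (Quotient (rel N F))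

theorem cc_pos {E X : Type*} [Finite X] [Nonempty X] (N : E → Set X) (F : Finset E) :
    1 ≤ cc N F := by
  have : Nonempty (Quotient (rel N F)) := ⟨Quotient.mk _ (Classical.arbitrary X)⟩
  exact Nat.card_pos

theorem cc_mono {E X : Type*} [Finite X] (N : E → Set X) {F F' : Finset E} (h : F ⊆ F') :
    cc N F' ≤ cc N F := by
  unfold cc
  refine Nat.card_le_card_of_surjective
    (Quotient.map' (s₁ := rel N F) (s₂ := rel N F') id fun x y hxy => rel_mono h hxy) ?_
  intro q
  induction q using Quotient.inductionOn with
  | _ x => exact ⟨Quotient.mk _ x, rfl⟩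

theorem cc_one {E X : Type*} [Finite X] {N : E → Set X} {F : Finset E} (h : cc N F ≤ 1) {S : Set X}
    (hS : Cr Set.univ S) : ∃ e ∈ F, Cr (N e) S := by
  by_contra hcon
  push Not at hcon
  obtain ⟨⟨x, _, hx⟩, y, _, hy⟩ := hS
  have : Subsingleton (Quotient (rel N F)) := by
    rw [← Finite.card_le_one_iff_subsingleton]; exact h
  have h2 := Subsingleton.elim (Quotient.mk (rel N F) x) (Quotient.mk (rel N F) y)
  have h3 : (rel N F).r x y := Quotient.exact h2
  exact hy ((h3 S hcon).1 hx)

open Classical in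
theorem cc_step {E X : Type*} [Fintype X] [Nonempty X] (N : E → Set X) (F : Finset E) (e : E) :
    Nat.card {K : Quotient (rel N F) // Cr (N e) {x | Quotient.mk (rel N F) x = K}}
      ≤ 2 * (cc N F - cc N (insert e F)) := by
  have hmono := cc_mono N (Finset.subset_insert e F)
  have : Fintype (Quotient (rel N F)) := Fintype.ofFinite _
  have : Fintype (Quotient (rel N (insert e F))) := Fintype.ofFinite _
  set Z : Finset (Quotient (rel N F)) :=
    Finset.univ.filter fun K => Cr (N e) {x | Quotient.mk (rel N F) x = K} with hZ
  have hZc : Nat.card {K : Quotient (rel N F) // Cr (N e) {x | Quotient.mk (rel N F) x = K}} = Z.card := by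
    rw [Nat.card_eq_fintype_card, Fintype.card_subtype]
  rw [hZc]
  by_cases hne : Z.Nonempty
  swap
  · rw [Finset.not_nonempty_iff_eq_empty] at hne
    simp [hne]
  obtain ⟨K, hK⟩ := hne
  have hK' := hK
  simp only [hZ, Finset.mem_filter, Finset.mem_univ, true_and] at hK'
  obtain ⟨⟨x, hx, hxK⟩, y, hy, hyK⟩ := hK'
  simp only [Set.mem_setOf_eq] at hxK hyK
  have h2 : 2 ≤ Z.card := by
    have : Finset.card {K, Quotient.mk (rel N F) y} = 2 := Finset.card_pair (Ne.symm hyK)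
    rw [← this]
    apply Finset.card_le_card
    intro L hL
    simp only [Finset.mem_insert, Finset.mem_singleton] at hL
    rcases hL with rfl | rfl
    · exact hK
    · simp only [hZ, Finset.mem_filter, Finset.mem_univ, true_and]
      refine ⟨⟨y, hy, rfl⟩, x, hx, ?_⟩
      simp only [Set.mem_setOf_eq]
      rw [hxK]; exact Ne.symm hyK
  let φ : Quotient (rel N F) → Quotient (rel N (insert e F)) :=
    Quotient.map' (s₁ := rel N F) (s₂ := rel N (insert e F)) id
      fun x y hxy => rel_mono (Finset.subset_insert e F) hxy
  have hφ : Function.Surjective φ := by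
    intro q
    induction q using Quotient.inductionOn with
    | _ x => exact ⟨Quotient.mk _ x, rfl⟩
  have hZφ : ∀ L ∈ Z, φ L = Quotient.mk (rel N (insert e F)) x := by
    intro L hL
    simp only [hZ, Finset.mem_filter, Finset.mem_univ, true_and] at hL
    obtain ⟨⟨z, hz, hzL⟩, -⟩ := hL
    simp only [Set.mem_setOf_eq] at hzL
    subst hzL
    exact Quotient.sound (s := rel N (insert e F)) (rel_of_mem (Finset.mem_insert_self _ _) hz hx)
  have hsub : (Finset.univ : Finset (Quotient (rel N (insert e F)))) ⊆
      insert (Quotient.mk (rel N (insert e F)) x) (Zᶜ.image φ) := by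
    intro q _
    obtain ⟨L, rfl⟩ := hφ q
    by_cases hL : L ∈ Z
    · rw [hZφ L hL]; exact Finset.mem_insert_self _ _
    · exact Finset.mem_insert_of_mem (Finset.mem_image_of_mem _ (by simpa using hL))
  have h3 := Finset.card_le_card hsub
  have h4 := Finset.card_insert_le (Quotient.mk (rel N (insert e F)) x) (Zᶜ.image φ)
  have h5 : (Zᶜ.image φ).card ≤ Zᶜ.card := Finset.card_image_le
  have h6 := Finset.card_add_card_compl Z
  have h7 : cc N F = Fintype.card (Quotient (rel N F)) := Nat.card_eq_fintype_card
  have h8 : cc N (insert e F) = (Finset.univ : Finset (Quotient (rel N (insert e F)))).card :=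
    Nat.card_eq_fintype_card
  omega

open Classical in
theorem cc_sum {E X : Type*} [Fintype E] [Fintype X] [Nonempty X] (N : E → Set X) (δ : ℝ)
    (hδ : ∀ S, Cr Set.univ S → δ ≤ (Finset.univ.filter fun e => Cr (N e) S).card) (hδ0 : 0 ≤ δ)
    (F : Finset E) :
    ∑ e, ((cc N (insert e F) : ℝ) - 1) ≤ (Fintype.card E - δ / 2) * ((cc N F : ℝ) - 1) := by
  have hm : ∀ e, (cc N (insert e F) : ℝ) ≤ cc N F := fun e => by
    exact_mod_cast cc_mono N (Finset.subset_insert e F)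
  have hpos : 1 ≤ cc N F := cc_pos N F
  have hpos' : (1 : ℝ) ≤ cc N F := by exact_mod_cast hpos
  have hE : ∑ e : E, ((cc N F : ℝ) - 1) = Fintype.card E * ((cc N F : ℝ) - 1) := by
    rw [Finset.sum_const, nsmul_eq_mul, Finset.card_univ]
  suffices h : δ * ((cc N F : ℝ) - 1) ≤ ∑ e, 2 * ((cc N F : ℝ) - cc N (insert e F)) by
    have h2 : ∑ e, 2 * ((cc N F : ℝ) - cc N (insert e F))
        = 2 * (∑ e : E, ((cc N F : ℝ) - 1) - ∑ e, ((cc N (insert e F) : ℝ) - 1)) := by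
      rw [← Finset.sum_sub_distrib, Finset.mul_sum]
      refine Finset.sum_congr rfl fun e _ => by ring
    rw [h2, hE] at h
    linarith
  rcases hpos.eq_or_lt with h1 | h1
  · rw [← h1]
    simp only [Nat.cast_one, sub_self, mul_zero]
    refine Finset.sum_nonneg fun e _ => ?_
    have := hm e
    rw [← h1] at this
    push_cast at this
    linarith
  have : Fintype (Quotient (rel N F)) := Fintype.ofFinite _
  have hcr : ∀ K : Quotient (rel N F), Cr Set.univ {x | Quotient.mk (rel N F) x = K} := by
    intro K
    obtain ⟨x, rfl⟩ := Quotient.exists_rep K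
    have : Nontrivial (Quotient (rel N F)) := Finite.one_lt_card_iff_nontrivial.1 h1
    obtain ⟨L, hL⟩ := exists_ne (Quotient.mk (rel N F) x)
    obtain ⟨y, rfl⟩ := Quotient.exists_rep L
    exact ⟨⟨x, trivial, rfl⟩, y, trivial, hL⟩
  calc δ * ((cc N F : ℝ) - 1) ≤ δ * cc N F := by nlinarith
    _ = ∑ K : Quotient (rel N F), δ := by
        simp [cc, Nat.card_eq_fintype_card, mul_comm]
    _ ≤ ∑ K : Quotient (rel N F),
        ((Finset.univ.filter fun e => Cr (N e) {x | Quotient.mk (rel N F) x = K}).card : ℝ) :=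
        Finset.sum_le_sum fun K _ => hδ _ (hcr K)
    _ = ∑ e, ((Finset.univ.filter fun K : Quotient (rel N F) =>
          Cr (N e) {x | Quotient.mk (rel N F) x = K}).card : ℝ) := by
        simp only [Finset.card_filter]
        push_cast
        exact Finset.sum_comm
    _ ≤ _ := by
        refine Finset.sum_le_sum fun e _ => ?_
        have h := cc_step N F e
        rw [Nat.card_eq_fintype_card, Fintype.card_subtype] at h
        have h' : ((Finset.univ.filter fun K : Quotient (rel N F) =>
          Cr (N e) {x | Quotient.mk (rel N F) x = K}).card : ℝ) ≤ (2 * (cc N F - cc N (insert e F)) : ℕ) := by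
          exact_mod_cast h
        rw [Nat.cast_mul, Nat.cast_sub (cc_mono N (Finset.subset_insert e F))] at h'
        exact_mod_cast h'

open Classical in
theorem cc_perm {E X : Type*} [Fintype E] [Fintype X] [Nonempty X] (N : E → Set X) (δ : ℝ)
    (hδ : ∀ S, Cr Set.univ S → δ ≤ (Finset.univ.filter fun e => Cr (N e) S).card) (hδ0 : 0 ≤ δ)
    (hM : δ ≤ Fintype.card E) (hM0 : 0 < Fintype.card E) (P : Finset E) :
    ∑ σ : Equiv.Perm E, ((cc N (P.image σ) : ℝ) - 1) ≤
      (1 - δ / (2 * Fintype.card E)) ^ P.card *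
        (Fintype.card (Equiv.Perm E) * ((Fintype.card X : ℝ) - 1)) := by
  have hM0' : (0 : ℝ) < Fintype.card E := by exact_mod_cast hM0
  induction P using Finset.induction_on with
  | empty =>
    simp only [Finset.image_empty, Finset.card_empty, pow_zero, one_mul, Finset.sum_const,
      nsmul_eq_mul, Finset.card_univ]
    have : (cc N (∅ : Finset E) : ℝ) ≤ Fintype.card X := by
      have : cc N (∅ : Finset E) ≤ Nat.card X :=
        Nat.card_le_card_of_surjective (Quotient.mk (rel N ∅)) Quotient.mk_surjective
      rw [Nat.card_eq_fintype_card] at this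
      exact_mod_cast this
    gcongr
  | insert a P ha ih =>
    set W := ∑ σ : Equiv.Perm E, ((cc N ((insert a P).image σ) : ℝ) - 1) with hW
    have hq : 0 ≤ 1 - δ / (2 * Fintype.card E) := by
      rw [sub_nonneg, div_le_one (by positivity)]; linarith
    have key : ∀ t : E, W ≤ ∑ σ : Equiv.Perm E, ((cc N (insert (σ t) (P.image σ)) : ℝ) - 1) := by
      intro t
      by_cases ht : t ∈ P
      · refine Finset.sum_le_sum fun σ _ => ?_
        rw [Finset.insert_eq_of_mem (Finset.mem_image_of_mem _ ht), Finset.image_insert]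
        have := cc_mono N (Finset.subset_insert (σ a) (P.image σ))
        have : (cc N (insert (σ a) (P.image σ)) : ℝ) ≤ cc N (P.image σ) := by exact_mod_cast this
        linarith
      · rw [hW]
        refine le_of_eq ?_
        refine Fintype.sum_equiv (Equiv.mulRight (Equiv.swap a t)) _ _ fun σ => ?_
        have h1 : P.image (σ * Equiv.swap a t) = P.image σ := by
          refine Finset.image_congr fun x hx => ?_
          have hxa : x ≠ a := fun h => ha (h ▸ hx)
          have hxt : x ≠ t := fun h => ht (h ▸ hx)
          simp [Equiv.swap_apply_of_ne_of_ne hxa hxt]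
        simp only [Equiv.coe_mulRight]
        rw [h1, Finset.image_insert]
        simp
    have h1 : Fintype.card E * W ≤ ∑ t : E, ∑ σ : Equiv.Perm E,
        ((cc N (insert (σ t) (P.image σ)) : ℝ) - 1) := by
      calc Fintype.card E * W = ∑ t : E, W := by simp
        _ ≤ _ := Finset.sum_le_sum fun t _ => key t
    rw [Finset.sum_comm] at h1
    have h2 : ∀ σ : Equiv.Perm E, ∑ t : E, ((cc N (insert (σ t) (P.image σ)) : ℝ) - 1)
        ≤ (Fintype.card E - δ / 2) * ((cc N (P.image σ) : ℝ) - 1) := by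
      intro σ
      have h := cc_sum N δ hδ hδ0 (P.image σ)
      rwa [← Equiv.sum_comp σ] at h
    have h3 := h1.trans (Finset.sum_le_sum fun σ _ => h2 σ)
    rw [← Finset.mul_sum] at h3
    have h4 : (Fintype.card E - δ / 2 : ℝ) = Fintype.card E * (1 - δ / (2 * Fintype.card E)) := by
      field_simp
    rw [h4, mul_assoc] at h3
    have h5 := le_of_mul_le_mul_left h3 hM0'
    rw [Finset.card_insert_of_notMem ha, pow_succ']
    calc W ≤ _ := h5
      _ ≤ _ := by rw [mul_assoc]; exact mul_le_mul_of_nonneg_left ih hq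

theorem num_bound {n : ℕ} (hn : 2 ≤ n) {M l s : ℕ} {δ : ℝ} (hl : 0 < l)
    (hs : s = M / l) (hδM : δ ≤ M) (hδ : 3 * l * Real.logb 2 n < δ) :
    (1 - δ / (2 * M)) ^ s * ((n : ℝ) - 1) < 1 / 2 := by
  have hn' : (2 : ℝ) ≤ n := by exact_mod_cast hn
  have hl' : (1 : ℝ) ≤ l := by exact_mod_cast hl
  have hlog : 1 ≤ Real.logb 2 n := by
    rw [Real.le_logb_iff_rpow_le (by norm_num) (by linarith)]; simpa using hn'
  have hMl : (3 : ℝ) * l < M := by nlinarith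
  have hMl' : 3 * l < M := by exact_mod_cast hMl
  have hs3 : 3 ≤ s := by rw [hs, Nat.le_div_iff_mul_le hl]; omega
  have hM0 : (0 : ℝ) < M := by nlinarith
  have hs1 : (M : ℝ) < (s + 1) * l := by
    have := Nat.lt_mul_div_succ M hl
    rw [← hs] at this
    have : (M : ℝ) < (l * (s + 1) : ℕ) := by exact_mod_cast this
    push_cast at this; linarith
  have hs3' : (3 : ℝ) ≤ s := by exact_mod_cast hs3
  have hs2 : (3 : ℝ) * M ≤ 4 * s * l := by nlinarith
  have hδ0 : 0 < δ := by nlinarith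
  have hq : 0 ≤ 1 - δ / (2 * M) := by
    rw [sub_nonneg, div_le_one (by positivity)]; linarith
  have h1 : (1 - δ / (2 * M)) ^ s ≤ Real.exp (-(3 / 2 * Real.log n)) := by
    calc (1 - δ / (2 * M)) ^ s ≤ (Real.exp (-(δ / (2 * M)))) ^ s := by
          gcongr; exact Real.one_sub_le_exp_neg _
      _ = Real.exp (-(s * (δ / (2 * M)))) := by rw [← Real.exp_nat_mul]; ring_nf
      _ ≤ _ := by
          rw [Real.exp_le_exp, neg_le_neg_iff]
          have hl2 : Real.log n ≤ 3 / 4 * Real.logb 2 n := by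
            have : Real.log n = Real.logb 2 n * Real.log 2 := by
              rw [Real.logb, div_mul_cancel₀]; exact (Real.log_pos (by norm_num)).ne'
            rw [this]
            have := Real.log_two_lt_d9
            nlinarith
          have h2 : 9 / 8 * Real.logb 2 n ≤ s * (δ / (2 * M)) := by
            rw [← mul_div_assoc, le_div_iff₀ (by positivity)]
            have : (3 * M) * (3 * Real.logb 2 n) ≤ (4 * s * l) * (3 * Real.logb 2 n) := by gcongr
            have : s * (3 * l * Real.logb 2 n) ≤ s * δ := by gcongr
            nlinarith
          linarith
  set y := Real.exp (-(3 / 2 * Real.log n)) with hy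
  have hy0 : 0 < y := Real.exp_pos _
  have hy2 : y ^ 2 * (n : ℝ) ^ 3 = 1 := by
    have hnn : (n : ℝ) ^ 3 = Real.exp (3 * Real.log n) := by
      rw [mul_comm, Real.exp_mul, Real.exp_log (by linarith)]; norm_cast
    rw [hnn, hy, ← Real.exp_nat_mul, ← Real.exp_add]
    rw [Real.exp_eq_one_iff]; push_cast; ring
  have h2 : (1 - δ / (2 * M)) ^ s * ((n : ℝ) - 1) ≤ y * (n - 1) :=
    mul_le_mul_of_nonneg_right h1 (by linarith)
  refine h2.trans_lt ?_
  refine lt_of_pow_lt_pow_left₀ 2 (by norm_num) ?_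
  have hcub : 4 * ((n : ℝ) - 1) ^ 2 < (n : ℝ) ^ 3 := by
    nlinarith [mul_nonneg (by linarith : (0 : ℝ) ≤ n) (sq_nonneg ((n : ℝ) - 2))]
  have : y ^ 2 * (4 * ((n : ℝ) - 1) ^ 2) < y ^ 2 * (n : ℝ) ^ 3 := by gcongr
  nlinarith

open Classical in
theorem color_type {E X : Type*} [Fintype E] [Fintype X] (N : E → Set X) (δ : ℝ) (hδ0 : 0 < δ)
    (hδ : ∀ S, Cr Set.univ S → δ ≤ (Finset.univ.filter fun e => Cr (N e) S).card)
    {n : ℕ} (hn : 2 ≤ n) (hX : Fintype.card X ≤ n) (c : ℕ)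
    (hc : 6 * ((c : ℝ) - 1) * Real.logb 2 n < δ) :
    ∃ D : Fin c → Set E, (∀ i j, i ≠ j → Disjoint (D i) (D j)) ∧
      ∀ j S, Cr Set.univ S → ∃ e ∈ D j, Cr (N e) S := by
  by_cases hno : ∃ S : Set X, Cr Set.univ S
  swap
  · exact ⟨fun _ => ∅, by simp, fun j S hS => (hno ⟨S, hS⟩).elim⟩
  obtain ⟨S₀, hS₀⟩ := hno
  have : Nonempty X := ⟨hS₀.1.choose⟩
  have hM : δ ≤ Fintype.card E := (hδ S₀ hS₀).trans (by exact_mod_cast Finset.card_le_univ _)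
  have hM0 : 0 < Fintype.card E := by
    have : (0 : ℝ) < Fintype.card E := hδ0.trans_le hM
    exact_mod_cast this
  rcases Nat.lt_or_ge c 2 with hc2 | hc2
  · refine ⟨fun _ => Set.univ, ?_, ?_⟩
    · intro i j hij; exact (hij (Fin.ext (by omega))).elim
    · intro j S hS
      have h := hδ0.trans_le (hδ S hS)
      have h : 0 < (Finset.univ.filter fun e => Cr (N e) S).card := by exact_mod_cast h
      obtain ⟨e, he⟩ := Finset.card_pos.1 h
      exact ⟨e, trivial, (Finset.mem_filter.1 he).2⟩
  set M := Fintype.card E with hMdef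
  obtain ⟨d, rfl⟩ : ∃ d, c = d + 1 := ⟨c - 1, by omega⟩
  set l := 2 * d with hl
  set s := M / l with hs
  have hl0 : 0 < l := by omega
  have hb := num_bound hn (M := M) (l := l) (s := s) (δ := δ) hl0 hs hM (by
    rw [hl]; push_cast at hc ⊢; linarith)
  have hcard : Fintype.card (Fin l × Fin s) ≤ Fintype.card E := by
    simp only [Fintype.card_prod, Fintype.card_fin]
    rw [hs]; exact Nat.mul_div_le M l
  obtain ⟨ι⟩ := Function.Embedding.nonempty_of_card_le hcard
  let P : Fin l → Finset E := fun j => Finset.univ.image fun i => ι (j, i)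
  have hPc : ∀ j, (P j).card = s := by
    intro j
    rw [Finset.card_image_of_injective, Finset.card_univ, Fintype.card_fin]
    intro a b hab
    have := ι.injective hab
    simpa using this
  have hPd : ∀ i j, i ≠ j → Disjoint (P i) (P j) := by
    intro i j hij
    rw [Finset.disjoint_left]
    intro x hx hy
    simp only [P, Finset.mem_image, Finset.mem_univ, true_and] at hx hy
    obtain ⟨a, rfl⟩ := hx
    obtain ⟨b, hb⟩ := hy
    have := ι.injective hb
    simp only [Prod.mk.injEq] at this
    exact hij this.1.symm
  have hX' : (Fintype.card X : ℝ) ≤ n := by exact_mod_cast hX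
  have hq : 0 ≤ 1 - δ / (2 * M) := by
    have : (0 : ℝ) < M := by exact_mod_cast hM0
    rw [sub_nonneg, div_le_one (by positivity)]; linarith
  have hsum : ∑ σ : Equiv.Perm E, ∑ j : Fin l, ((cc N ((P j).image σ) : ℝ) - 1) <
      ∑ σ : Equiv.Perm E, (d : ℝ) := by
    rw [Finset.sum_comm]
    have hp0 : (0 : ℝ) < Fintype.card (Equiv.Perm E) := by exact_mod_cast Fintype.card_pos
    calc ∑ j : Fin l, ∑ σ : Equiv.Perm E, ((cc N ((P j).image σ) : ℝ) - 1)
        ≤ ∑ j : Fin l, (1 - δ / (2 * M)) ^ s * (Fintype.card (Equiv.Perm E) * ((n : ℝ) - 1)) := by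
          refine Finset.sum_le_sum fun j _ => ?_
          have h := cc_perm N δ hδ hδ0.le hM hM0 (P j)
          rw [hPc] at h
          refine h.trans ?_
          gcongr
      _ = l * Fintype.card (Equiv.Perm E) * ((1 - δ / (2 * M)) ^ s * ((n : ℝ) - 1)) := by
          simp; ring
      _ < l * Fintype.card (Equiv.Perm E) * (1 / 2) := by
          have : (0 : ℝ) < l := by exact_mod_cast hl0
          gcongr
      _ = _ := by simp [hl]; ring
  obtain ⟨σ, -, hσ⟩ := Finset.exists_lt_of_sum_lt hsum
  have hpos : ∀ F : Finset E, 1 ≤ cc N F := fun F => cc_pos N F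
  set bad : Finset (Fin l) := Finset.univ.filter fun j => ¬ cc N ((P j).image σ) ≤ 1 with hbad
  have hbadc : (bad.card : ℝ) < d := by
    refine lt_of_le_of_lt ?_ hσ
    rw [hbad, Finset.card_filter]
    push_cast
    refine Finset.sum_le_sum fun j _ => ?_
    have h1 := hpos ((P j).image σ)
    have h1' : (1 : ℝ) ≤ cc N ((P j).image σ) := by exact_mod_cast h1
    split_ifs with h
    · linarith
    · have : 2 ≤ cc N ((P j).image σ) := by omega
      have : (2 : ℝ) ≤ cc N ((P j).image σ) := by exact_mod_cast this
      linarith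
  have hbadc' : bad.card < d := by exact_mod_cast hbadc
  have hgood : d + 1 ≤ badᶜ.card := by
    have := Finset.card_add_card_compl bad
    rw [Fintype.card_fin] at this
    omega
  have hcard2 : Fintype.card (Fin (d + 1)) ≤ Fintype.card {j // j ∈ badᶜ} := by
    rw [Fintype.card_fin, Fintype.card_coe]; exact hgood
  obtain ⟨g⟩ := Function.Embedding.nonempty_of_card_le hcard2
  refine ⟨fun j => ((P (g j).1).image σ : Finset E), ?_, ?_⟩
  · intro i j hij
    rw [Finset.disjoint_coe]
    rw [Finset.disjoint_image σ.injective]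
    refine hPd _ _ fun h => hij (g.injective (Subtype.ext h))
  · intro j S hS
    have h := (g j).2
    simp only [hbad, Finset.mem_compl, Finset.mem_filter, Finset.mem_univ, true_and, not_not] at h
    obtain ⟨e, he, hc⟩ := cc_one h hS
    exact ⟨e, by exact_mod_cast he, hc⟩

open Classical in
theorem color {E X : Type*} [Fintype E] [Finite X] (A : Set X) (N : E → Set X) (hNA : ∀ e, N e ⊆ A)
    (δ : ℝ) (hδ0 : 0 < δ)
    (hδ : ∀ S, Cr A S → δ ≤ (Finset.univ.filter fun e => Cr (N e) S).card)
    {n : ℕ} (hn : 2 ≤ n) (hX : A.ncard ≤ n) (c : ℕ)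
    (hc : 6 * ((c : ℝ) - 1) * Real.logb 2 n < δ) :
    ∃ D : Fin c → Set E, (∀ i j, i ≠ j → Disjoint (D i) (D j)) ∧
      ∀ j S, Cr A S → ∃ e ∈ D j, Cr (N e) S := by
  have : Fintype A := Fintype.ofFinite _
  have hcr : ∀ (S : Set A) e, Cr {x : A | (x : X) ∈ N e} S → Cr (N e) (Subtype.val '' S) := by
    rintro S e ⟨⟨x, hx, hxS⟩, y, hy, hyS⟩
    refine ⟨⟨x, hx, x, hxS, rfl⟩, y, hy, ?_⟩
    rintro ⟨z, hz, hzy⟩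
    exact hyS (Subtype.ext hzy ▸ hz)
  have hcr2 : ∀ (S : Set X) e, Cr {x : A | (x : X) ∈ N e} (Subtype.val ⁻¹' S) ↔ Cr (N e) S := by
    intro S e
    constructor
    · rintro ⟨⟨x, hx, hxS⟩, y, hy, hyS⟩
      exact ⟨⟨x, hx, hxS⟩, y, hy, hyS⟩
    · rintro ⟨⟨x, hx, hxS⟩, y, hy, hyS⟩
      exact ⟨⟨⟨x, hNA e hx⟩, hx, hxS⟩, ⟨y, hNA e hy⟩, hy, hyS⟩
  obtain ⟨D, h1, h2⟩ := color_type (E := E) (X := A) (fun e => {x : A | (x : X) ∈ N e}) δ hδ0 (by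
    intro S hS
    have hS' : Subtype.val ⁻¹' (Subtype.val '' S) = S := Set.preimage_image_eq _ Subtype.val_injective
    have := hδ (Subtype.val '' S) (by
      obtain ⟨⟨x, -, hx⟩, y, -, hy⟩ := hS
      refine ⟨⟨x, x.2, x, hx, rfl⟩, y, y.2, ?_⟩
      rintro ⟨z, hz, hzy⟩
      exact hy (Subtype.ext hzy ▸ hz))
    simp only [← hcr2, hS'] at this
    convert this) hn (by rwa [← Nat.card_eq_fintype_card, Nat.card_coe_set_eq]) c hc
  refine ⟨D, h1, fun j S hS => ?_⟩
  obtain ⟨e, he, h⟩ := h2 j (Subtype.val ⁻¹' S) (by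
    obtain ⟨⟨x, hx, hxS⟩, y, hy, hyS⟩ := hS
    exact ⟨⟨⟨x, hx⟩, trivial, hxS⟩, ⟨y, hy⟩, trivial, hyS⟩)
  exact ⟨e, he, (hcr2 S e).1 h⟩

end SFP

namespace SFP

def Sep {ι X : Type*} (T : ι → Set X) (I : Finset ι) (S : Set X) : Prop := ∃ i ∈ I, Cr (T i) S

theorem sep_uncross {ι X : Type*} (T : ι → Set X) (I : Finset ι) : ∀ S₁ S₂, Sep T I S₁ → Sep T I S₂ →
    (Sep T I (S₁ ∩ S₂) ∧ Sep T I (S₁ ∪ S₂)) ∨ (Sep T I (S₁ ∩ S₂ᶜ) ∧ Sep T I (S₁ ∪ S₂ᶜ)) := by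
  rintro S₁ S₂ ⟨i, hi, ⟨a, ha, ha'⟩, b, hb, hb'⟩ ⟨j, hj, ⟨c, hc, hc'⟩, d, hd, hd'⟩
  have key : ∀ (l : ι) (x y : X) (S : Set X), l ∈ I → x ∈ T l → y ∈ T l → x ∈ S → y ∉ S → Sep T I S :=
    fun l x y S hl hx hy hxS hyS => ⟨l, hl, ⟨x, hx, hxS⟩, y, hy, hyS⟩
  by_cases h1 : a ∈ S₂
  · have hA : Sep T I (S₁ ∩ S₂) := key i a b _ hi ha hb ⟨ha', h1⟩ (fun h => hb' h.1)
    by_cases h2 : b ∈ S₂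
    · have hC : Sep T I (S₁ ∪ S₂ᶜ) := key i a b _ hi ha hb (Or.inl ha')
        (fun h => h.elim hb' (fun h => h h2))
      by_cases h3 : d ∈ S₁
      · exact Or.inr ⟨key j d c _ hj hd hc ⟨h3, hd'⟩ (fun h => h.2 hc'), hC⟩
      · exact Or.inl ⟨hA, key j c d _ hj hc hd (Or.inr hc') (fun h => h.elim h3 hd')⟩
    · exact Or.inl ⟨hA, key i a b _ hi ha hb (Or.inl ha') (fun h => h.elim hb' h2)⟩
  · have hB : Sep T I (S₁ ∩ S₂ᶜ) := key i a b _ hi ha hb ⟨ha', h1⟩ (fun h => hb' h.1)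
    by_cases h2 : b ∈ S₂
    · exact Or.inr ⟨hB, key i a b _ hi ha hb (Or.inl ha') (fun h => h.elim hb' (fun h => h h2))⟩
    · have hD : Sep T I (S₁ ∪ S₂) := key i a b _ hi ha hb (Or.inl ha') (fun h => h.elim hb' h2)
      by_cases h3 : c ∈ S₁
      · exact Or.inl ⟨key j c d _ hj hc hd ⟨h3, hc'⟩ (fun h => hd' h.2), hD⟩
      · exact Or.inr ⟨hB, key j d c _ hj hd hc (Or.inr hd') (fun h => h.elim h3 (fun h => h hc'))⟩

open Classical in
theorem good_J {E X ι : Type*} [Fintype E] (T : ι → Set X) (I : Finset ι)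
    (N : E → Set X) (k : ℕ) (δ : ℝ) (hδ : 0 < δ) (p : ℕ) (hp : (p + 1) * δ ≤ k)
    (hne : ∀ i ∈ I, (T i).Nonempty)
    (hcut : ∀ i ∈ I, ∀ S, Cr (T i) S → k ≤ (Finset.univ.filter fun e => Cr (N e) S).card) :
    ∀ t ≤ p, ∀ J ⊆ I, J.Nonempty → J.card < 2 ^ (t + 1) →
      ((Finset.univ.filter fun e => Cr (N e) (⋃ i ∈ J, T i)).card : ℝ) ≤ (p - t) * δ →
      ∃ J' ⊆ I, J'.Nonempty ∧ ∀ S, Cr (⋃ i ∈ J', T i) S →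
        δ ≤ ((Finset.univ.filter fun e => N e ⊆ (⋃ i ∈ J', T i) ∧ Cr (N e) S).card : ℝ) := by
  intro t
  induction t with
  | zero => 
    intro _ J hJI hJ hJc hJx
    refine ⟨J, hJI, hJ, ?_⟩
    obtain ⟨i, rfl⟩ : ∃ i, J = {i} := Finset.card_eq_one.1 (by have := hJ.card_pos; omega)
    intro S hS
    have hTi : (⋃ l ∈ ({i} : Finset ι), T l) = T i := by simp
    rw [hTi] at hJx hS ⊢
    by_contra hcon
    push Not at hcon
    have hS' : Cr (T i) S := hS
    have hsub : (Finset.univ.filter fun e => Cr (N e) (T i ∩ S)) ⊆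
        (Finset.univ.filter fun e => Cr (N e) (T i)) ∪
        (Finset.univ.filter fun e => N e ⊆ (T i) ∧ Cr (N e) S) := by
      intro e he
      simp only [Finset.mem_filter, Finset.mem_univ, true_and, Finset.mem_union] at he ⊢
      obtain ⟨⟨x, hx, hxS⟩, y, hy, hyS⟩ := he
      by_cases h : N e ⊆ T i
      · exact Or.inr ⟨h, ⟨x, hx, hxS.2⟩, y, hy, fun h' => hyS ⟨h hy, h'⟩⟩
      · obtain ⟨z, hz, hz'⟩ := Set.not_subset.1 h
        exact Or.inl ⟨⟨x, hx, hxS.1⟩, z, hz, hz'⟩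
    have h1 := hcut i (hJI (by simp)) (T i ∩ S) (by
      obtain ⟨⟨x, hx, hxS⟩, y, hy, hyS⟩ := hS'
      exact ⟨⟨x, hx, hx, hxS⟩, y, hy, fun h => hyS h.2⟩)
    have h2 : (k : ℝ) ≤ _ := Nat.cast_le.2 (h1.trans ((Finset.card_le_card hsub).trans (Finset.card_union_le _ _)))
    push_cast at h2 hJx
    linarith
  | succ t ih => 
    intro htp J hJI hJ hJc hJx
    by_cases hgood : ∀ S, Cr (⋃ i ∈ J, T i) S →
        δ ≤ ((Finset.univ.filter fun e => N e ⊆ (⋃ i ∈ J, T i) ∧ Cr (N e) S).card : ℝ)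
    · exact ⟨J, hJI, hJ, hgood⟩
    push Not at hgood
    obtain ⟨S, hS, hlt⟩ := hgood
    set A := ⋃ i ∈ J, T i with hA
    have hsub : ∀ S' : Set X, (S' = S ∨ S' = Sᶜ) → (Finset.univ.filter fun e => Cr (N e) (A ∩ S')) ⊆
        (Finset.univ.filter fun e => Cr (N e) A) ∪
        (Finset.univ.filter fun e => N e ⊆ A ∧ Cr (N e) S) := by
      intro S' hS' e he
      simp only [Finset.mem_filter, Finset.mem_univ, true_and, Finset.mem_union] at he ⊢
      obtain ⟨⟨x, hx, hxS⟩, y, hy, hyS⟩ := he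
      by_cases h : N e ⊆ A
      · have hy2 : y ∉ S' := fun h' => hyS ⟨h hy, h'⟩
        rcases hS' with rfl | rfl
        · exact Or.inr ⟨h, ⟨x, hx, hxS.2⟩, y, hy, hy2⟩
        · exact Or.inr ⟨h, ⟨y, hy, not_not.1 hy2⟩, x, hx, hxS.2⟩
      · obtain ⟨z, hz, hz'⟩ := Set.not_subset.1 h
        exact Or.inl ⟨⟨x, hx, hxS.1⟩, z, hz, hz'⟩
    have hcard : ∀ S' : Set X, (S' = S ∨ S' = Sᶜ) →
        ((Finset.univ.filter fun e => Cr (N e) (A ∩ S')).card : ℝ) < (p - t) * δ := by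
      intro S' hS'
      have h2 := Nat.cast_le (α := ℝ).2 ((Finset.card_le_card (hsub S' hS')).trans (Finset.card_union_le _ _))
      push_cast at h2 hJx
      linarith
    have hTA : ∀ i ∈ J, T i ⊆ A := fun i hi => Set.subset_biUnion_of_mem (u := T) hi
    have hnc : ∀ i ∈ J, ¬ Cr (T i) S := by
      intro i hi hc
      have h1 := hcut i (hJI hi) (A ∩ S) (by
        obtain ⟨⟨x, hx, hxS⟩, y, hy, hyS⟩ := hc
        exact ⟨⟨x, hx, hTA i hi hx, hxS⟩, y, hy, fun h => hyS h.2⟩)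
      have h2 := hcard S (Or.inl rfl)
      have h3 : (k : ℝ) ≤ _ := Nat.cast_le.2 h1
      have : (0 : ℝ) ≤ t * δ := by positivity
      linarith
    have main : ∀ S' : Set X, (S' = S ∨ S' = Sᶜ) → ∀ J' : Finset ι, J' = J.filter (fun i => T i ⊆ S') →
        J'.Nonempty ∧ (⋃ i ∈ J', T i) = A ∩ S' := by
      rintro S' hS' _ rfl
      have hnc' : ∀ i ∈ J, ∀ x ∈ T i, x ∈ S' → T i ⊆ S' := by
        intro i hi x hx hxS y hy
        have := hnc i hi
        unfold Cr at this
        by_contra hyS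
        rcases hS' with rfl | rfl
        · exact this ⟨⟨x, hx, hxS⟩, y, hy, hyS⟩
        · exact this ⟨⟨y, hy, not_not.1 hyS⟩, x, hx, hxS⟩
      constructor
      · obtain ⟨x, hx, hxS⟩ : ∃ x ∈ A, x ∈ S' := by
          rcases hS' with rfl | rfl
          · exact hS.1
          · exact hS.2
        simp only [hA, Set.mem_iUnion] at hx
        obtain ⟨i, hi, hx⟩ := hx
        exact ⟨i, Finset.mem_filter.2 ⟨hi, hnc' i hi x hx hxS⟩⟩
      · ext x
        simp only [Set.mem_iUnion, Finset.mem_filter, hA, Set.mem_inter_iff]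
        constructor
        · rintro ⟨i, ⟨hi, hi'⟩, hx⟩; exact ⟨⟨i, hi, hx⟩, hi' hx⟩
        · rintro ⟨⟨i, hi, hx⟩, hxS⟩; exact ⟨i, ⟨hi, hnc' i hi x hx hxS⟩, hx⟩
    have hdis : Disjoint (J.filter (fun i => T i ⊆ S)) (J.filter (fun i => T i ⊆ Sᶜ)) := by
      rw [Finset.disjoint_left]
      intro i hi hi'
      rw [Finset.mem_filter] at hi hi'
      obtain ⟨x, hx⟩ := hne i (hJI hi.1)
      exact hi'.2 hx (hi.2 hx)
    have hc1 : (J.filter (fun i => T i ⊆ S)).card + (J.filter (fun i => T i ⊆ Sᶜ)).card ≤ J.card := by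
      rw [← Finset.card_union_of_disjoint hdis]
      exact Finset.card_le_card (Finset.union_subset (Finset.filter_subset _ _) (Finset.filter_subset _ _))
    have hex : ∃ S' : Set X, (S' = S ∨ S' = Sᶜ) ∧ (J.filter (fun i => T i ⊆ S')).card < 2 ^ (t + 1) := by
      by_cases h : (J.filter (fun i => T i ⊆ S)).card < 2 ^ (t + 1)
      · exact ⟨S, Or.inl rfl, h⟩
      · refine ⟨Sᶜ, Or.inr rfl, ?_⟩
        rw [pow_succ] at hJc
        omega
    obtain ⟨S', hS', hc⟩ := hex
    obtain ⟨hn, he⟩ := main S' hS' _ rfl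
    refine ih (by omega) _ ((Finset.filter_subset _ _).trans hJI) hn hc ?_
    rw [he]
    exact (hcard S' hS').le

end SFP

namespace SFP

open Classical in
noncomputable def N1 {E X : Type*} (N : E → Set X) (A : Set X) (e : E) : Set X :=
  if N e ⊆ A then ∅ else N e \ A

def H1 {E X : Type*} (N : E → Set X) (A : Set X) : SimpleGraph E where
  Adj e f := e ≠ f ∧ (¬ N e ⊆ A ∧ ∃ x ∈ N e, x ∈ A) ∧ (¬ N f ⊆ A ∧ ∃ x ∈ N f, x ∈ A)
  symm := ⟨fun _ _ h => ⟨h.1.symm, h.2.2, h.2.1⟩⟩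
  loopless := ⟨fun _ h => h.1 rfl⟩

theorem mem_N1 {E X : Type*} {N : E → Set X} {A : Set X} {e : E} {x : X} :
    x ∈ N1 N A e ↔ x ∈ N e ∧ x ∉ A := by
  unfold N1
  split_ifs with h
  · simp only [Set.mem_empty_iff_false, false_iff]
    exact fun h' => h'.2 (h h'.1)
  · rfl

open Classical in
theorem contract_cut {E X : Type*} [Fintype E] (N : E → Set X) (A : Set X) (k : ℕ) (S : Set X)
    (P D : Finset E) (h : IsCut (H1 N A) (N1 N A) S P D)
    (hk : ∀ S', (S' = S ∪ A ∨ S' = S \ A) → k ≤ (Finset.univ.filter fun e => Cr (N e) S').card) :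
    P.card + k ≤ D.card := by
  suffices hs : ∃ S', (S' = S ∪ A ∨ S' = S \ A) ∧ (Finset.univ.filter fun e => Cr (N e) S') ⊆ D \ P by
    obtain ⟨S', hS', hs⟩ := hs
    have h1 := (hk S' hS').trans (Finset.card_le_card hs)
    rw [Finset.card_sdiff_of_subset h.sub] at h1
    have h2 := Finset.card_le_card h.sub
    omega
  by_cases hc : ∃ e ∈ P, ¬ N e ⊆ A ∧ ∃ x ∈ N e, x ∈ A
  · obtain ⟨e0, he0, he0A, he0x⟩ := hc
    refine ⟨_, Or.inl rfl, ?_⟩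
    intro e he
    simp only [Finset.mem_filter, Finset.mem_univ, true_and] at he
    obtain ⟨⟨x, hx, hxS⟩, y, hy, hyS⟩ := he
    have hy1 : y ∉ S := fun h => hyS (Or.inl h)
    have hy2 : y ∉ A := fun h => hyS (Or.inr h)
    have heP : e ∉ P := fun hP => hy1 (h.inS e hP y (mem_N1.2 ⟨hy, hy2⟩))
    refine Finset.mem_sdiff.2 ⟨?_, heP⟩
    by_cases hxA : x ∈ A
    · refine h.adj e0 e ⟨?_, ⟨he0A, he0x⟩, fun h => hy2 (h hy), x, hx, hxA⟩ he0
      rintro rfl; exact heP he0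
    · by_contra hD
      exact h.outS e hD x (mem_N1.2 ⟨hx, hxA⟩) (hxS.resolve_right hxA)
  · push Not at hc
    refine ⟨_, Or.inr rfl, ?_⟩
    intro e he
    simp only [Finset.mem_filter, Finset.mem_univ, true_and] at he
    obtain ⟨⟨x, hx, hxS, hxA⟩, y, hy, hyS⟩ := he
    refine Finset.mem_sdiff.2 ⟨?_, ?_⟩
    · by_contra hD
      exact h.outS e hD x (mem_N1.2 ⟨hx, hxA⟩) hxS
    · intro hP
      have hyA : y ∉ A := hc e hP (fun h => hxA (h hx)) y hy
      exact hyS ⟨h.inS e hP y (mem_N1.2 ⟨hy, hyA⟩), hyA⟩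

theorem combine {E X : Type*} {N : E → Set X} {A : Set X} {b : Set E} {P : Set X}
    (h : Linked (H1 N A) (N1 N A) b P) {S : Set X} (hA : ¬ Cr A S)
    (hb : ∀ e ∈ b, ¬ N e ⊆ A → ¬ Cr (N e) S) : ¬ Cr P S := by
  refine h S {f | N f ⊆ S} ?_ ?_ ?_
  · intro f _ hf x hx
    exact hf (mem_N1.1 hx).1
  · intro f hfb hf x hx hxS
    obtain ⟨hx, hxA⟩ := mem_N1.1 hx
    obtain ⟨y, hy, hyS⟩ := Set.not_subset.1 hf
    exact hb f hfb (fun h => hxA (h hx)) ⟨⟨x, hx, hxS⟩, y, hy, hyS⟩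
  · rintro f hf g hg ⟨_, ⟨_, x, hx, hxA⟩, hgA, y, hy, hyA⟩ hfL z hz
    by_contra hzS
    refine hb g hg hgA ⟨⟨y, hy, ?_⟩, z, hz, hzS⟩
    by_contra hyS
    exact hA ⟨⟨x, hxA, hfL hx⟩, y, hyA, hyS⟩

open Classical in
theorem main_hyper {E X ι : Type*} [Fintype E] [Finite X] (T : ι → Set X)
    (hdisj : ∀ i j, i ≠ j → Disjoint (T i) (T j)) (k : ℕ) (δ : ℝ) (hδ : 0 < δ) (p : ℕ)
    (hp : (p + 1) * δ ≤ k) {n : ℕ} (hn : 2 ≤ n) (hTn : (⋃ i, T i).ncard ≤ n) (c : ℕ)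
    (hc : 6 * ((c : ℝ) - 1) * Real.logb 2 n < δ) (I : Finset ι) :
    I.card < 2 ^ (p + 1) → (∀ i ∈ I, (T i).Nonempty) → ∀ N : E → Set X,
    (∀ e, N e ⊆ ⋃ i ∈ I, T i) →
    (∀ i ∈ I, ∀ S, Cr (T i) S → k ≤ (Finset.univ.filter fun e => Cr (N e) S).card) →
    ∃ F : Fin c → Set E, (∀ i j, i ≠ j → Disjoint (F i) (F j)) ∧
      ∀ j, ∀ i ∈ I, ∀ S, Cr (T i) S → ∃ e ∈ F j, Cr (N e) S := by
  induction I using Finset.strongInduction with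
  | H I ih =>
  intro hIc hIne N hNI hcut
  by_cases hI : I.Nonempty
  swap
  · rw [Finset.not_nonempty_iff_eq_empty] at hI
    subst hI
    exact ⟨fun _ => ∅, by simp, by simp⟩
  obtain ⟨J, hJI, hJ, hJg⟩ := good_J T I N k δ hδ p hp hIne hcut p le_rfl I subset_rfl hI hIc (by
    rw [Finset.filter_false_of_mem]
    · simp
    · rintro e - ⟨_, y, hy, hy'⟩
      exact hy' (hNI e hy))
  set A := ⋃ i ∈ J, T i with hA
  have hTA : ∀ i ∈ J, T i ⊆ A := fun i hi => Set.subset_biUnion_of_mem (u := T) hi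
  have hTA' : ∀ i, i ∉ J → ∀ x ∈ T i, x ∉ A := by
    intro i hi x hx hxA
    simp only [hA, Set.mem_iUnion] at hxA
    obtain ⟨j, hj, hxj⟩ := hxA
    exact Set.disjoint_left.1 (hdisj i j (by rintro rfl; exact hi hj)) hx hxj
  obtain ⟨D, hDd, hD⟩ := color A (fun e => if N e ⊆ A then N e else ∅)
    (by intro e; split_ifs with h; exacts [h, Set.empty_subset _]) δ hδ (by
      intro S hS
      refine (hJg S hS).trans ?_
      refine Nat.cast_le.2 (Finset.card_le_card ?_)
      intro e he
      simp only [Finset.mem_filter, Finset.mem_univ, true_and] at he ⊢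
      rw [if_pos he.1]; exact he.2) hn
      ((Set.ncard_le_ncard (Set.iUnion₂_subset fun i _ => Set.subset_iUnion T i)
        (Set.toFinite _)).trans hTn) c hc
  have hD' : ∀ j S, Cr A S → ∃ e ∈ D j, N e ⊆ A ∧ Cr (N e) S := by
    intro j S hS
    obtain ⟨e, he, hcr⟩ := hD j S hS
    by_cases h : N e ⊆ A
    · rw [if_pos h] at hcr; exact ⟨e, he, h, hcr⟩
    · rw [if_neg h] at hcr; obtain ⟨⟨x, hx, _⟩, _⟩ := hcr; exact hx.elim
  obtain ⟨N', b, hbd, hbl, hbU, hb⟩ := reduce (E := E) (X := X) (Sep := Sep T (I \ J))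
    (sep_uncross T (I \ J)) (k := k) (⋃ i ∈ I \ J, T i) _ (H1 N A) (N1 N A) rfl (by
      rintro S P D ⟨i, hi, hCr⟩ hcutS
      rw [Finset.mem_sdiff] at hi
      refine contract_cut N A k S P D hcutS ?_
      intro S' hS'
      refine hcut i hi.1 S' ?_
      obtain ⟨⟨x, hx, hxS⟩, y, hy, hyS⟩ := hCr
      have hxA := hTA' i hi.2 x hx
      have hyA := hTA' i hi.2 y hy
      rcases hS' with rfl | rfl
      · exact ⟨⟨x, hx, Or.inl hxS⟩, y, hy, fun h => h.elim hyS hyA⟩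
      · exact ⟨⟨x, hx, hxS, hxA⟩, y, hy, fun h => hyS h.1⟩) (by
      intro e x hx
      obtain ⟨hx, hxA⟩ := mem_N1.1 hx
      have := hNI e hx
      simp only [Set.mem_iUnion, Finset.mem_sdiff] at this ⊢
      obtain ⟨i, hi, hxi⟩ := this
      exact ⟨i, ⟨hi, fun hiJ => hxA (hTA i hiJ hxi)⟩, hxi⟩)
  obtain ⟨F', hF'd, hF'⟩ := ih (I \ J) (Finset.sdiff_ssubset hJI hJ)
    (lt_of_le_of_lt (Finset.card_le_card Finset.sdiff_subset) hIc)
    (fun i hi => hIne i (Finset.mem_sdiff.1 hi).1) N' hbU (fun i hi S hS => hb S ⟨i, hi, hS⟩)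
  refine ⟨fun j => {e | (N e ⊆ A ∧ e ∈ D j) ∨ (¬ N e ⊆ A ∧ ∃ f ∈ F' j, e ∈ b f)}, ?_, ?_⟩
  · intro i j hij
    rw [Set.disjoint_left]
    rintro e (⟨h, he⟩ | ⟨h, f, hf, he⟩) (⟨h', he'⟩ | ⟨h', f', hf', he'⟩)
    · exact Set.disjoint_left.1 (hDd i j hij) he he'
    · exact h' h
    · exact h h'
    · by_cases hff : f = f'
      · subst hff; exact Set.disjoint_left.1 (hF'd i j hij) hf hf'
      · exact Set.disjoint_left.1 (hbd f f' hff) he he'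
  · intro j i hi S hS
    by_cases hAS : Cr A S
    · obtain ⟨e, he, h1, h2⟩ := hD' j S hAS
      exact ⟨e, Or.inl ⟨h1, he⟩, h2⟩
    have hiJ : i ∉ J := by
      intro hiJ
      obtain ⟨⟨x, hx, hxS⟩, y, hy, hyS⟩ := hS
      exact hAS ⟨⟨x, hTA i hiJ hx, hxS⟩, y, hTA i hiJ hy, hyS⟩
    obtain ⟨f, hf, hfS⟩ := hF' j i (Finset.mem_sdiff.2 ⟨hi, hiJ⟩) S hS
    by_contra hcon
    push Not at hcon
    exact combine (hbl f) hAS (fun e he heA => hcon e (Or.inr ⟨heA, f, hf, he⟩)) hfS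

end SFP


namespace SFP

def Ng {V : Type*} (G : SimpleGraph V) (U : Set V) : V ⊕ Sym2 V → Set V
  | Sum.inl v => {x | x ∈ U ∧ v ∉ U ∧ G.Adj v x}
  | Sum.inr e => {x | x ∈ U ∧ x ∈ e ∧ e ∈ G.edgeSet ∧ ∀ y ∈ e, y ∈ U}

def Hg {V : Type*} (G : SimpleGraph V) (U : Set V) : SimpleGraph (V ⊕ Sym2 V) where
  Adj a b := ∃ v w, a = Sum.inl v ∧ b = Sum.inl w ∧ G.Adj v w ∧ v ∉ U ∧ w ∉ U
  symm := ⟨fun _ _ ⟨v, w, h1, h2, h3, h4, h5⟩ => ⟨w, v, h2, h1, h3.symm, h5, h4⟩⟩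
  loopless := ⟨fun _ ⟨v, w, h1, h2, h3, _, _⟩ => h3.ne (Sum.inl.inj (h1.symm.trans h2))⟩

open Classical in
theorem cut_top {V : Type*} {G : SimpleGraph V} {U : Set V} {u v : V} {k : ℕ}
    (hu : u ∈ U) (hv : v ∈ U) {S : Set V} (huS : u ∈ S) (hvS : v ∉ S)
    (hP : HasElemPaths G U u v k) {A D : Finset (V ⊕ Sym2 V)} (h : IsCut (Hg G U) (Ng G U) S A D) :
    A.card + k ≤ D.card := by
  obtain ⟨P, -, hPd⟩ := hP
  have key : ∀ i, ∃ a ∈ D \ A, (∃ y, y ∉ U ∧ y ∈ (P i).support ∧ a = Sum.inl y) ∨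
      ∃ e ∈ (P i).edges, a = Sum.inr e := by
    intro i
    obtain ⟨d, hd, hd1, hd2⟩ := (P i).exists_boundary_dart
      {x | (x ∈ U ∧ x ∈ S) ∨ (x ∉ U ∧ Sum.inl x ∈ A)} (Or.inl ⟨hu, huS⟩) (by
        rintro (⟨_, h⟩ | ⟨h, _⟩)
        · exact hvS h
        · exact h hv)
    have hadj := d.adj
    have hsup : d.snd ∈ (P i).support := (P i).dart_snd_mem_support_of_mem_darts hd
    have hedge : s(d.fst, d.snd) ∈ (P i).edges := List.mem_map.2 ⟨d, hd, rfl⟩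
    simp only [Set.mem_setOf_eq, not_or, not_and] at hd1 hd2
    obtain ⟨hd2, hd3⟩ := hd2
    by_cases hyU : d.snd ∈ U
    · have hyS := hd2 hyU
      rcases hd1 with ⟨hxU, hxS⟩ | ⟨hxU, hxA⟩
      · have hall : ∀ y ∈ s(d.fst, d.snd), y ∈ U := by
          intro y hy
          rcases Sym2.mem_iff.1 hy with rfl | rfl
          exacts [hxU, hyU]
        refine ⟨Sum.inr s(d.fst, d.snd), Finset.mem_sdiff.2 ⟨?_, ?_⟩, Or.inr ⟨_, hedge, rfl⟩⟩
        · by_contra hD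
          exact h.outS _ hD d.fst ⟨hxU, Sym2.mem_mk_left _ _, hadj, hall⟩ hxS
        · intro hA
          exact hyS (h.inS _ hA d.snd ⟨hyU, Sym2.mem_mk_right _ _, hadj, hall⟩)
      · exact absurd (h.inS _ hxA d.snd ⟨hyU, hxU, hadj⟩) hyS
    · have hyA := hd3 hyU
      refine ⟨Sum.inl d.snd, Finset.mem_sdiff.2 ⟨?_, hyA⟩, Or.inl ⟨_, hyU, hsup, rfl⟩⟩
      rcases hd1 with ⟨hxU, hxS⟩ | ⟨hxU, hxA⟩
      · by_contra hD
        exact h.outS _ hD d.fst ⟨hxU, hyU, hadj.symm⟩ hxS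
      · exact h.adj _ _ ⟨_, _, rfl, rfl, hadj, hxU, hyU⟩ hxA
  choose f hf hf' using key
  have hinj : Function.Injective f := by
    intro i j hij
    by_contra hne
    obtain ⟨h1, h2⟩ := hPd i j hne
    rcases hf' i with ⟨y, hyU, hy, hfi⟩ | ⟨e, he, hfi⟩ <;>
    rcases hf' j with ⟨y', hyU', hy', hfj⟩ | ⟨e', he', hfj⟩ <;>
    rw [hij, hfj] at hfi
    · obtain rfl := Sum.inl.inj hfi
      rcases h2 _ hy hy' with h | h
      · exact hyU h
      · rcases h with rfl | rfl
        · exact hyU hu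
        · exact hyU hv
    · cases hfi
    · cases hfi
    · obtain rfl := Sum.inr.inj hfi
      exact h1 _ he he'
  have hle := Finset.card_le_card_of_injOn (s := Finset.univ) (t := D \ A) f (fun i _ => hf i)
    hinj.injOn
  rw [Finset.card_univ, Fintype.card_fin, Finset.card_sdiff_of_subset h.sub] at hle
  have := Finset.card_le_card h.sub
  omega

theorem exists_paths {V : Type*} {G : SimpleGraph V} {U : Set V} {u v : V} {k : ℕ}
    (h : k ≤ elemConn G U u v) (hk : 0 < k) : ∃ k' ≥ k, HasElemPaths G U u v k' := by
  unfold elemConn at h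
  by_cases hb : BddAbove {k | HasElemPaths G U u v k}
  · have h0 : {k | HasElemPaths G U u v k}.Nonempty :=
      ⟨0, Fin.elim0, fun i => i.elim0, fun i => i.elim0⟩
    exact ⟨_, h, Nat.sSup_mem h0 hb⟩
  · rw [Nat.sSup_of_not_bddAbove hb] at h
    omega

def Qg {V : Type*} (G : SimpleGraph V) (U : Set V) (B : Set (V ⊕ Sym2 V)) : SimpleGraph V where
  Adj x y := G.Adj x y ∧ (x ∉ U → Sum.inl x ∈ B) ∧ (y ∉ U → Sum.inl y ∈ B) ∧
    (x ∈ U → y ∈ U → Sum.inr s(x, y) ∈ B)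
  symm := ⟨fun x y ⟨h1, h2, h3, h4⟩ => ⟨h1.symm, h3, h2, fun hy hx => by
    rw [Sym2.eq_swap]; exact h4 hx hy⟩⟩
  loopless := ⟨fun _ h => h.1.ne rfl⟩

theorem Qg_disj {V : Type*} (G : SimpleGraph V) (U : Set V) {B B' : Set (V ⊕ Sym2 V)}
    (h : Disjoint B B') {F F' : SimpleGraph V} (hF : F ≤ Qg G U B) (hF' : F' ≤ Qg G U B') :
    EDisj U F F' := by
  have hd := Set.disjoint_left.1 h
  constructor
  · rw [Set.disjoint_left]
    intro e
    induction e using Sym2.ind with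
    | _ x y =>
    intro h1 h2
    obtain ⟨-, a1, a2, a3⟩ := hF h1
    obtain ⟨-, b1, b2, b3⟩ := hF' h2
    by_cases hx : x ∈ U
    · by_cases hy : y ∈ U
      · exact hd (a3 hx hy) (b3 hx hy)
      · exact hd (a2 hy) (b2 hy)
    · exact hd (a1 hx) (b1 hx)
  · rintro x ⟨y, h1⟩ ⟨z, h2⟩
    by_contra hx
    exact hd ((hF h1).2.1 hx) ((hF' h2).2.1 hx)

theorem linked_top {V : Type*} {G : SimpleGraph V} {U : Set V} {b B : Set (V ⊕ Sym2 V)}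
    {P : Set V} (h : Linked (Hg G U) (Ng G U) b P) (hbB : b ⊆ B) {S : Set V}
    (hS : ∀ x y, (Qg G U B).Adj x y → x ∈ S → y ∈ S) : ¬ Cr P S := by
  have hN : ∀ w x, Sum.inl w ∈ b → x ∈ Ng G U (Sum.inl w) → (Qg G U B).Adj w x := by
    rintro w x hw ⟨hxU, hwU, hadj⟩
    exact ⟨hadj, fun _ => hbB hw, fun h => absurd hxU h, fun h => absurd h hwU⟩
  refine h S {f | (∃ w ∈ S, f = Sum.inl w) ∨ ∃ e, (∀ x ∈ e, x ∈ S) ∧ f = Sum.inr e} ?_ ?_ ?_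
  · rintro f hf (⟨w, hw, rfl⟩ | ⟨e, he, rfl⟩) x hx
    · exact hS _ _ (hN w x hf hx) hw
    · exact he x hx.2.1
  · rintro (w | e) hf hfL x hx hxS
    · exact hfL (Or.inl ⟨w, hS _ _ (hN w x hf hx).symm hxS, rfl⟩)
    · refine hfL (Or.inr ⟨e, ?_, rfl⟩)
      obtain ⟨hxU, hxe, heG, heU⟩ := hx
      intro z hz
      obtain ⟨y, rfl⟩ := hxe
      rcases Sym2.mem_iff.1 hz with rfl | rfl
      · exact hxS
      · exact hS x z ⟨heG, fun h => absurd hxU h, fun h => absurd (heU z hz) h, fun _ _ => hbB hf⟩ hxS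
  · rintro f hf g hg ⟨v, w, rfl, rfl, hadj, hv, hw⟩ hfL
    rcases hfL with ⟨v', hv', hvv⟩ | ⟨e, _, hvv⟩
    · obtain rfl := Sum.inl.inj hvv
      exact Or.inl ⟨w, hS v w ⟨hadj, fun _ => hbB hf, fun _ => hbB hg, fun h => absurd h hv⟩ hv', rfl⟩
    · cases hvv

theorem numbers {k m n : ℕ} (hk : 0 < k) (hm : 2 ≤ m) (hn : 2 ≤ n) :
    6 * (((⌈(k : ℝ) / (12 * Real.logb 2 n * Real.logb 2 m)⌉₊ : ℕ) : ℝ) - 1) * Real.logb 2 n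
      < (k : ℝ) / ((Nat.log 2 m : ℕ) + 1) := by
  have hl : ∀ a : ℕ, 2 ≤ a → 1 ≤ Real.logb 2 a := by
    intro a ha
    rw [Real.le_logb_iff_rpow_le (by norm_num) (by positivity)]
    simpa using (by exact_mod_cast ha : (2 : ℝ) ≤ a)
  have hln := hl n hn
  have hlm := hl m hm
  have hp : (Nat.log 2 m : ℝ) ≤ Real.logb 2 m := by
    rw [Real.le_logb_iff_rpow_le (by norm_num) (by positivity), Real.rpow_natCast]
    exact_mod_cast Nat.pow_log_le_self 2 (by omega)
  set x := (k : ℝ) / (12 * Real.logb 2 n * Real.logb 2 m) with hx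
  have hx0 : 0 ≤ x := by positivity
  have hc := Nat.ceil_lt_add_one hx0
  have hk' : (0 : ℝ) < k := by exact_mod_cast hk
  calc 6 * (((⌈x⌉₊ : ℕ) : ℝ) - 1) * Real.logb 2 n < 6 * x * Real.logb 2 n := by
        gcongr; linarith
    _ = (k : ℝ) / (2 * Real.logb 2 m) := by rw [hx]; field_simp; norm_num
    _ ≤ _ := by
        gcongr; linarith

end SFP

/-- **Packing Steiner forests in general graphs.** If the `m ≥ 2` disjoint terminal
groups are each `k`-element-connected and `T = ⋃ i, T i` has at least two elements, then
`G` contains at least `k / (12 · log₂ |T| · log₂ m)` pairwise element-disjoint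
Steiner forests. -/
theorem steiner_forest_packing {V : Type*} [Fintype V]
    {m : ℕ} (hm : 2 ≤ m) (G : SimpleGraph V) (T : Fin m → Set V)
    (hdisj : ∀ i j, i ≠ j → Disjoint (T i) (T j)) (k : ℕ)
    (hT : 2 ≤ (⋃ i, T i).ncard)
    (hconn : ∀ i, ∀ u ∈ T i, ∀ v ∈ T i, u ≠ v → k ≤ elemConn G (⋃ i, T i) u v) :
    ∃ n : ℕ,
      (k : ℝ) / (12 * Real.logb 2 ((⋃ i, T i).ncard) * Real.logb 2 m) ≤ (n : ℝ) ∧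
      ∃ F : Fin n → SimpleGraph V,
        (∀ j, IsSteinerForest G T (F j)) ∧
        ∀ i j, i ≠ j → EDisj (⋃ i, T i) (F i) (F j) := by
  classical
  rcases Nat.eq_zero_or_pos k with rfl | hk
  · exact ⟨0, by simp, Fin.elim0, fun j => j.elim0, fun j => j.elim0⟩
  set U := ⋃ i, T i with hU
  have hTU : ∀ i, T i ⊆ U := fun i => Set.subset_iUnion T i
  obtain ⟨N', b, hbd, hbl, hbU, hb⟩ := SFP.reduce (Sep := SFP.Sep T Finset.univ)
    (SFP.sep_uncross T Finset.univ) (k := k) U _ (SFP.Hg G U) (SFP.Ng G U) rfl (by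
      rintro S A D ⟨i, -, ⟨u, hu, huS⟩, v, hv, hvS⟩ hcut
      obtain ⟨k', hk', hP⟩ := SFP.exists_paths
        (hconn i u hu v hv (by rintro rfl; exact hvS huS)) hk
      have := SFP.cut_top (hTU i hu) (hTU i hv) huS hvS hP hcut
      omega) (by
      rintro (v | e) x hx
      · exact hx.1
      · exact hx.1)
  obtain ⟨F, hFd, hF⟩ := SFP.main_hyper T hdisj k ((k : ℝ) / ((Nat.log 2 m : ℕ) + 1))
    (by have : (0 : ℝ) < k := by exact_mod_cast hk
        positivity) (Nat.log 2 m)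
    (by rw [mul_div_cancel₀]; positivity) hT le_rfl _ (SFP.numbers hk hm hT)
    (Finset.univ.filter fun i => (T i).Nonempty)
    (lt_of_le_of_lt (Finset.card_le_univ _) (by
      rw [Fintype.card_fin]; exact Nat.lt_pow_succ_log_self (by norm_num) m))
    (fun i hi => (Finset.mem_filter.1 hi).2) N' (by
      intro e x hx
      have := hbU e hx
      simp only [hU, Set.mem_iUnion, Finset.mem_filter, Finset.mem_univ, true_and] at this ⊢
      obtain ⟨i, hi⟩ := this
      exact ⟨i, ⟨x, hi⟩, hi⟩)
    (fun i _ S hS => hb S ⟨i, Finset.mem_univ _, hS⟩)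
  refine ⟨_, Nat.le_ceil _, ?_⟩
  have hsub := fun j => (SFP.Qg G U {a | ∃ e ∈ F j, a ∈ b e}).exists_isAcyclic_reachable_eq_le
  choose Fo hFo hac hre using hsub
  refine ⟨Fo, fun j => ⟨(hFo j).trans fun x y h => h.1, hac j, ?_⟩, ?_⟩
  · intro i u hu v hv
    rw [hre j]
    by_contra hcon
    obtain ⟨e, he, hcr⟩ := hF j i (Finset.mem_filter.2 ⟨Finset.mem_univ _, u, hu⟩)
      {z | (SFP.Qg G U {a | ∃ e ∈ F j, a ∈ b e}).Reachable u z}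
      ⟨⟨u, hu, Reachable.refl _⟩, v, hv, hcon⟩
    exact SFP.linked_top (hbl e) (B := {a | ∃ e ∈ F j, a ∈ b e}) (fun a ha => ⟨e, he, ha⟩)
      (fun x y hxy hx => Reachable.trans hx hxy.reachable) hcr
  · intro i j hij
    refine SFP.Qg_disj G U ?_ (hFo i) (hFo j)
    rw [Set.disjoint_left]
    rintro a ⟨f, hf, haf⟩ ⟨f', hf', haf'⟩
    by_cases hff : f = f'
    · subst hff; exact Set.disjoint_left.1 (hFd i j hij) hf hf'
    · exact Set.disjoint_left.1 (hbd f f' hff) haf haf'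
end
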